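/- arXiv:math/0703473 — 4 statements merged into one kernel-verified Lean document; each statement's English description precedes it below -/
import Mathlib

section
/- Let k, l, m ≥ 1 be integers with 1/(2k) + 1/(2l) + 1/(2m+1) < 1, and let Δ = Δ(2k, 2l, 2m+1) with canonical generators c₀, c₁, c₂ (so the first two link periods are even and the third is odd). Then c₀ is conjugate to c₂ in Δ; the centralizer of c₀ in Δ equals the subgroup generated by c₀, (c₀c₁)^k, and (c₂c₀)^m (c₂c₁)^l (c₀c₂)^m; and the centralizer of c₁ in Δ equals the subgroup generated by c₁, (c₀c₁)^k, and (c₁c₂)^l. -/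
/-- Relators for the reflection group
`⟨c₀,c₁,c₂ ∣ c₀² = c₁² = c₂² = (c₀c₁)^k' = (c₁c₂)^l' = (c₂c₀)^m' = 1⟩`. -/
def triRels (k' l' m' : ℕ) : Set (FreeGroup (Fin 3)) :=
  {FreeGroup.of 0 ^ 2, FreeGroup.of 1 ^ 2, FreeGroup.of 2 ^ 2,
   (FreeGroup.of 0 * FreeGroup.of 1) ^ k',
   (FreeGroup.of 1 * FreeGroup.of 2) ^ l',
   (FreeGroup.of 2 * FreeGroup.of 0) ^ m'}

/-- The group `Δ(k', l', m')` with the above presentation. -/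
def Tri (k' l' m' : ℕ) : Type := PresentedGroup (triRels k' l' m')

instance (k' l' m' : ℕ) : Group (Tri k' l' m') :=
  inferInstanceAs (Group (PresentedGroup (triRels k' l' m')))

/-- The canonical generators `c₀, c₁, c₂` of `Δ(k', l', m')`. -/
def cgen (k' l' m' : ℕ) (j : Fin 3) : Tri k' l' m' :=
  PresentedGroup.of (rels := triRels k' l' m') j


section GeomRep
open Polynomial.Chebyshev

variable {B : Type*} [Fintype B] [DecidableEq B]

/-- The linear form attached to the simple root `i`. -/
noncomputable def gForm (M : CoxeterMatrix B) (i : B) : Module.Dual ℝ (B → ℝ) :=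
  Fintype.linearCombination ℝ (fun j => -2 * Real.cos (Real.pi / M i j))

theorem gForm_single (M : CoxeterMatrix B) (i j : B) :
    gForm M i (Pi.single j 1) = -2 * Real.cos (Real.pi / M i j) := by
  simp [gForm]

theorem gForm_self (M : CoxeterMatrix B) (i : B) : gForm M i (Pi.single i 1) = 2 := by
  simp [gForm_single, M.diagonal]

/-- Reflection of the geometric representation. -/
noncomputable def gRefl (M : CoxeterMatrix B) (i : B) : (B → ℝ) ≃ₗ[ℝ] (B → ℝ) :=
  Module.reflection (gForm_self M i)

theorem S_even_vanish (m : ℕ) (hm : 3 ≤ m) (q : ℤ) (hq : (m : ℤ) = 2 * q) :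
    (S ℝ (q - 1)).eval (2 * Real.cos (2 * (Real.pi / m))) = 0 ∧ True := by
  have hm' : (3 : ℝ) ≤ m := by exact_mod_cast hm
  have hs : Real.sin (2 * (Real.pi / m)) ≠ 0 := by
    apply ne_of_gt
    apply Real.sin_pos_of_pos_of_lt_pi
    · positivity
    · rw [← mul_div_assoc, div_lt_iff₀ (by linarith)]
      nlinarith [Real.pi_pos]
  refine ⟨?_, trivial⟩
  have h := S_two_mul_real_cos (2 * (Real.pi / m)) (q - 1)
  have hq' : (m : ℝ) = 2 * q := by exact_mod_cast hq
  have : ((((q - 1 : ℤ) : ℝ) + 1) * (2 * (Real.pi / m))) = Real.pi := by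
    push_cast
    field_simp
    linarith
  rw [this, Real.sin_pi] at h
  exact (mul_eq_zero.mp h).resolve_right hs

theorem S_odd_vanish (m : ℕ) (hm : 3 ≤ m) (q : ℤ) (hq : (m : ℤ) = 2 * q + 1) :
    (S ℝ q).eval (2 * Real.cos (2 * (Real.pi / m))) +
      (S ℝ (q - 1)).eval (2 * Real.cos (2 * (Real.pi / m))) = 0 := by
  have hm' : (3 : ℝ) ≤ m := by exact_mod_cast hm
  have hs : Real.sin (2 * (Real.pi / m)) ≠ 0 := by
    apply ne_of_gt
    apply Real.sin_pos_of_pos_of_lt_pi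
    · positivity
    · rw [← mul_div_assoc, div_lt_iff₀ (by linarith)]
      nlinarith [Real.pi_pos]
  have h := S_two_mul_real_cos (2 * (Real.pi / m)) (q - 1)
  have h2 := S_two_mul_real_cos (2 * (Real.pi / m)) q
  have hq' : (m : ℝ) = 2 * q + 1 := by exact_mod_cast hq
  have e1 : ((((q - 1 : ℤ) : ℝ) + 1) * (2 * (Real.pi / m))) = Real.pi - Real.pi / m := by
    push_cast
    field_simp
    linarith
  have e2 : (((q : ℝ) + 1) * (2 * (Real.pi / m))) = Real.pi / m + Real.pi := by
    field_simp
    linarith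
  rw [e1, Real.sin_pi_sub] at h
  rw [e2, Real.sin_add_pi] at h2
  have : ((S ℝ q).eval (2 * Real.cos (2 * (Real.pi / m))) +
      (S ℝ (q - 1)).eval (2 * Real.cos (2 * (Real.pi / m)))) * Real.sin (2 * (Real.pi / m)) = 0 := by
    rw [add_mul, h, h2]; ring
  exact (mul_eq_zero.mp this).resolve_right hs

theorem gRefl_t (M : CoxeterMatrix B) (i j : B) :
    2 * Real.cos (2 * (Real.pi / M i j)) =
    gForm M i (Pi.single j 1) * gForm M j (Pi.single i 1) - 2 := by
  rw [gForm_single, gForm_single, M.symmetric j i, Real.cos_two_mul]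
  ring

theorem gRefl_pow (M : CoxeterMatrix B) (i j : B) (h0 : M i j ≠ 0) :
    (gRefl M i * gRefl M j) ^ (M i j) = 1 := by
  by_cases hij : i = j
  · subst hij
    rw [M.diagonal, pow_one]
    apply LinearEquiv.ext
    intro z
    exact Module.involutive_reflection (gForm_self M i) z
  have h1 := M.off_diagonal i j hij
  by_cases h2 : M i j = 2
  · rw [h2]
    have e1 : gForm M i (Pi.single j 1) = 0 := by simp [gForm_single, h2]
    have e2 : gForm M j (Pi.single i 1) = 0 := by simp [gForm_single, M.symmetric j i, h2]
    apply LinearEquiv.ext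
    intro z
    rw [sq]
    simp only [gRefl, LinearEquiv.mul_apply, Module.reflection_apply, map_sub, map_smul, e1, e2,
      gForm_self, LinearEquiv.coe_one, id]
    module
  have h3 : 3 ≤ M i j := by omega
  apply LinearEquiv.ext
  intro z
  have key := Module.reflection_mul_reflection_pow_apply (gForm_self M i) (gForm_self M j)
    (M i j) z _ (gRefl_t M i j)
  change ((gRefl M i * gRefl M j) ^ (M i j)) z = _ at key
  rw [key]
  set m := M i j with hm
  obtain ⟨q, hq | hq⟩ := Nat.even_or_odd' m
  · have a1 : (((m : ℕ) : ℤ) - 2) / 2 = (q : ℤ) - 1 := by omega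
    have a2 : (((m : ℕ) : ℤ) - 1) / 2 = (q : ℤ) - 1 := by omega
    rw [a1, a2, (S_even_vanish m h3 q (by omega)).1]
    simp
  · have a1 : (((m : ℕ) : ℤ) - 3) / 2 = (q : ℤ) - 1 := by omega
    have a2 : (((m : ℕ) : ℤ) - 1) / 2 = (q : ℤ) := by omega
    have a3 : (((m : ℕ) : ℤ) - 2) / 2 = (q : ℤ) - 1 := by omega
    have a4 : (((m : ℕ) : ℤ)) / 2 = (q : ℤ) := by omega
    rw [a1, a2, a3, a4, S_odd_vanish m h3 q (by omega)]
    simp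

theorem gRefl_pow_ne (M : CoxeterMatrix B) (i j : B) (hij : i ≠ j) (n : ℕ) (hn : 0 < n)
    (hnm : n < M i j) : (gRefl M i * gRefl M j) ^ n ≠ 1 := by
  intro h
  by_cases h2 : M i j = 2
  · have hn1 : n = 1 := by omega
    subst hn1
    have e1 : gForm M i (Pi.single j 1) = 0 := by simp [gForm_single, h2]
    have := congrFun (congrArg (fun g : (B → ℝ) ≃ₗ[ℝ] (B → ℝ) => g (Pi.single j 1)) h) j
    simp [gRefl, LinearEquiv.mul_apply, Module.reflection_apply, gForm_self, e1] at this
    norm_num at this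
  have h3 : 3 ≤ M i j := by omega
  have key := Module.reflection_mul_reflection_pow_apply_self (gForm_self M i) (gForm_self M j)
    n _ (gRefl_t M i j)
  change ((gRefl M i * gRefl M j) ^ n) _ = _ at key
  rw [h] at key
  have k1 := congrFun key i
  have k2 := congrFun key j
  simp [hij, hij.symm, Pi.single_apply] at k1 k2
  set m := M i j with hm
  have hm' : (3 : ℝ) ≤ m := by exact_mod_cast h3
  have hnm' : (n : ℝ) < m := by exact_mod_cast hnm
  have hn' : (0 : ℝ) < n := by exact_mod_cast hn
  have hs : Real.sin (2 * (Real.pi / m)) ≠ 0 := by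
    apply ne_of_gt
    apply Real.sin_pos_of_pos_of_lt_pi
    · positivity
    · rw [← mul_div_assoc, div_lt_iff₀ (by linarith)]
      nlinarith [Real.pi_pos]
  have hg : gForm M j (Pi.single i 1) ≠ 0 := by
    rw [gForm_single, M.symmetric j i, ← hm]
    have : 0 < Real.cos (Real.pi / m) := by
      apply Real.cos_pos_of_mem_Ioo
      constructor
      · have : 0 < Real.pi / m := by positivity
        linarith [Real.pi_pos]
      · rw [div_lt_div_iff₀ (by linarith) (by norm_num)]
        nlinarith [Real.pi_pos]
    intro h; linarith
  have s1 : (S ℝ ((n : ℤ) - 1)).eval (2 * Real.cos (2 * (Real.pi / m))) = 0 := by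
    rcases k2 with h | h
    · exact h
    · exact absurd h hg
  rw [s1, add_zero] at k1
  have t1 := S_two_mul_real_cos (2 * (Real.pi / m)) (n - 1)
  have t2 := S_two_mul_real_cos (2 * (Real.pi / m)) n
  rw [s1, zero_mul] at t1
  rw [← k1, one_mul] at t2
  push_cast at t1 t2
  rw [sub_add_cancel] at t1
  rw [add_mul, Real.sin_add, ← t1, zero_mul, zero_add, one_mul] at t2
  have hc : Real.cos (n * (2 * (Real.pi / m))) = 1 := by
    apply mul_right_cancel₀ hs
    rw [← t2, one_mul]
  have hlt : n * (2 * (Real.pi / m)) < 2 * Real.pi := by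
    have : n * (2 * (Real.pi / m)) = 2 * Real.pi * (n / m) := by ring
    rw [this]
    have : (n : ℝ) / m < 1 := by rw [div_lt_one (by linarith)]; exact hnm'
    nlinarith [Real.pi_pos]
  have hpos : 0 < n * (2 * (Real.pi / m)) := by positivity
  have := (Real.cos_eq_one_iff_of_lt_of_lt (by linarith) hlt).mp hc
  linarith

theorem simple_pow_ne {W : Type*} [Group W] {M : CoxeterMatrix B} (cs : CoxeterSystem M W)
    (h0 : ∀ i j, M i j ≠ 0) (i j : B) (hij : i ≠ j) (n : ℕ) (hn : 0 < n)
    (hnm : n < M i j) : (cs.simple i * cs.simple j) ^ n ≠ 1 := by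
  intro h
  have hl : M.IsLiftable (gRefl M) := fun i j => gRefl_pow M i j (h0 i j)
  apply gRefl_pow_ne M i j hij n hn hnm
  have := congrArg (cs.lift ⟨gRefl M, hl⟩) h
  simpa using this

end GeomRep

section Exchange
variable {B W : Type*} [Group W] {M : CoxeterMatrix B} (cs : CoxeterSystem M W)

open Classical in
/-- The generator of the sign action on `W × ZMod 2`. -/
noncomputable def sgnFun (g : W) (p : W × ZMod 2) : W × ZMod 2 :=
  (g * p.1 * g⁻¹, p.2 + if p.1 = g then 1 else 0)

theorem sgnFun_invol (g : W) (hg : g * g = 1) : Function.Involutive (sgnFun g) := by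
  classical
  rintro ⟨t, e⟩
  have hg' : g⁻¹ = g := inv_eq_of_mul_eq_one_left hg
  have hiff : g * t * g⁻¹ = g ↔ t = g := by
    rw [mul_inv_eq_iff_eq_mul, mul_right_inj]
  have h1 : g * (g * t * g⁻¹) * g⁻¹ = t := by
    rw [hg']
    calc _ = (g * g) * t * (g * g) := by group
      _ = t := by rw [hg]; simp
  refine Prod.ext h1 ?_
  change e + (if t = g then 1 else 0) + (if g * t * g⁻¹ = g then 1 else 0) = e
  by_cases h : t = g
  · rw [if_pos h, if_pos (hiff.mpr h), add_assoc, show (1 : ZMod 2) + 1 = 0 from rfl, add_zero]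
  · rw [if_neg h, if_neg (mt hiff.mp h), add_zero, add_zero]

/-- The sign action generator as a permutation. -/
noncomputable def sgnPerm (i : B) : Equiv.Perm (W × ZMod 2) :=
  (sgnFun_invol (cs.simple i) (cs.simple_mul_simple_self i)).toPerm

theorem sgnPerm_apply (i : B) (p : W × ZMod 2) : sgnPerm cs i p = sgnFun (cs.simple i) p := rfl

open Classical in
theorem sgnPerm_pow_apply (i j : B) (n : ℕ) (t : W) (e : ZMod 2) :
    ((sgnPerm cs i * sgnPerm cs j) ^ n) (t, e) =
      ((cs.simple i * cs.simple j) ^ n * t * ((cs.simple i * cs.simple j) ^ n)⁻¹,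
        e + ∑ q ∈ Finset.range (2 * n),
          if t = cs.simple j * (cs.simple i * cs.simple j) ^ q then (1 : ZMod 2) else 0) := by
  induction n with
  | zero => simp
  | succ n ih =>
    rw [pow_succ', Equiv.Perm.mul_apply, ih, Equiv.Perm.mul_apply, sgnPerm_apply, sgnPerm_apply]
    set a := cs.simple i with ha
    set b := cs.simple j with hb
    have haa : a⁻¹ = a := cs.inv_simple i
    have hbb : b⁻¹ = b := cs.inv_simple j
    have hb2 : b * b = 1 := cs.simple_mul_simple_self j
    have hc : ∀ q : ℕ, b * (a * b) ^ q * b = ((a * b) ^ q)⁻¹ := by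
      intro q
      have : b * (a * b) ^ q * b⁻¹ = (b * (a * b) * b⁻¹) ^ q := by rw [conj_pow]
      rw [hbb] at this
      rw [this, ← inv_pow, mul_inv_rev, haa, hbb]
      congr 1
      simp [mul_assoc, hb2]
    have hc' : ∀ q : ℕ, b * (a * b) ^ q = ((a * b) ^ q)⁻¹ * b := by
      intro q
      rw [← hc q, mul_assoc, hb2, mul_one]
    have e1 : (a * b) ^ n * t * ((a * b) ^ n)⁻¹ = b ↔ t = b * (a * b) ^ (2 * n) := by
      rw [two_mul, pow_add, ← mul_assoc, hc', mul_inv_eq_iff_eq_mul, mul_assoc, hc', 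
        ← mul_assoc, ← eq_inv_mul_iff_mul_eq, mul_assoc]
    have e2 : b * ((a * b) ^ n * t * ((a * b) ^ n)⁻¹) * b⁻¹ = a ↔
        t = b * (a * b) ^ (2 * n + 1) := by
      rw [mul_inv_eq_iff_eq_mul, ← eq_inv_mul_iff_mul_eq, hbb, mul_inv_eq_iff_eq_mul, 
        ← eq_inv_mul_iff_mul_eq, ← mul_assoc, ← mul_assoc, ← hc', mul_assoc, mul_assoc,
        show 2 * n + 1 = n + (1 + n) by ring, pow_add, pow_add, pow_one]
      try simp only [mul_assoc]
    simp only [sgnFun, e1, e2]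
    rw [show 2 * (n + 1) = 2 * n + 1 + 1 by ring, Finset.sum_range_succ, Finset.sum_range_succ]
    ext
    · simp only [mul_inv_rev, pow_succ', mul_assoc]
    · simp only [add_assoc]

theorem sgnPerm_liftable : M.IsLiftable (sgnPerm cs) := by
  intro i j
  classical
  apply Equiv.ext
  rintro ⟨t, e⟩
  rw [sgnPerm_pow_apply, cs.simple_mul_simple_pow]
  rw [two_mul, Finset.sum_range_add]
  have : ∀ q, (cs.simple i * cs.simple j) ^ (M i j + q) = (cs.simple i * cs.simple j) ^ q := by
    intro q
    rw [pow_add, cs.simple_mul_simple_pow, one_mul]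
  simp only [this]
  rw [CharTwo.add_self_eq_zero]
  simp

open Classical in
theorem sgn_word (ω : List B) (t : W) (e : ZMod 2) :
    cs.lift ⟨sgnPerm cs, sgnPerm_liftable cs⟩ (cs.wordProd ω) (t, e) =
      (cs.wordProd ω * t * (cs.wordProd ω)⁻¹, e + ((cs.rightInvSeq ω).count t : ZMod 2)) := by
  induction ω with
  | nil => simp
  | cons i ω ih =>
    rw [cs.wordProd_cons, map_mul, Equiv.Perm.mul_apply, ih, cs.lift_apply_simple, sgnPerm_apply]
    have : cs.wordProd ω * t * (cs.wordProd ω)⁻¹ = cs.simple i ↔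
        (cs.wordProd ω)⁻¹ * cs.simple i * cs.wordProd ω = t := by
      rw [mul_inv_eq_iff_eq_mul, ← eq_inv_mul_iff_mul_eq, ← mul_assoc, eq_comm]
    simp only [sgnFun, this, CoxeterSystem.rightInvSeq, List.count_cons, beq_iff_eq]
    ext
    · simp only [mul_inv_rev, mul_assoc]
    · push_cast
      simp only [add_assoc]

theorem mem_ris_of_descent (ω : List B) (i : B)
    (h : cs.IsRightDescent (cs.wordProd ω) i) : cs.simple i ∈ cs.rightInvSeq ω := by
  classical
  by_contra hn
  obtain ⟨ω', hr, hw⟩ := cs.exists_isReduced (cs.wordProd ω * cs.simple i)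
  have h1 := sgn_word cs ω' (cs.simple i) 0
  rw [← hw, map_mul, Equiv.Perm.mul_apply, cs.lift_apply_simple, sgnPerm_apply] at h1
  simp only [sgnFun, if_true] at h1
  rw [mul_inv_cancel_right, sgn_word, List.count_eq_zero_of_not_mem hn] at h1
  have h2 := congrArg Prod.snd h1
  simp only at h2
  have hmem : cs.simple i ∈ cs.rightInvSeq ω' := by
    by_contra hn'
    rw [List.count_eq_zero_of_not_mem hn'] at h2
    simp at h2
  have h3 := (cs.isRightInversion_of_mem_rightInvSeq hr hmem).2
  rw [← hw, cs.simple_mul_simple_cancel_right] at h3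
  exact absurd h (not_lt.mpr h3.le)

theorem exchange (ω : List B) (i : B)
    (h : cs.IsRightDescent (cs.wordProd ω) i) : ∃ n, n < ω.length ∧
      (cs.rightInvSeq ω).getD n 1 = cs.simple i ∧
      cs.wordProd ω * cs.simple i = cs.wordProd (ω.eraseIdx n) := by
  obtain ⟨n, hn, he⟩ := List.mem_iff_getElem.mp (mem_ris_of_descent cs ω i h)
  have he' : (cs.rightInvSeq ω).getD n 1 = cs.simple i := by
    rw [List.getD_eq_getElem _ 1 hn, he]
  refine ⟨n, by simpa using hn, he', ?_⟩
  rw [← cs.wordProd_mul_getD_rightInvSeq, he']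

theorem mem_ris_alternating (i j : B) (p : ℕ) (t : W)
    (ht : t ∈ cs.rightInvSeq (CoxeterSystem.alternatingWord i j p)) :
    ∃ q, q < p ∧ t = cs.simple j * (cs.simple i * cs.simple j) ^ q := by
  induction p generalizing i j t with
  | zero => simp [CoxeterSystem.alternatingWord] at ht
  | succ p ih =>
    rw [CoxeterSystem.alternatingWord_succ, cs.rightInvSeq_concat] at ht
    simp only [List.concat_eq_append, List.mem_append, List.mem_map, List.mem_singleton] at ht
    rcases ht with ⟨t', ht', rfl⟩ | rfl
    · obtain ⟨q, hq, rfl⟩ := ih j i t' ht'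
      refine ⟨q + 1, by omega, ?_⟩
      rw [MulAut.conj_apply, cs.inv_simple]
      have : (cs.simple i * cs.simple j) ^ (q + 1) =
          cs.simple i * (cs.simple j * cs.simple i) ^ q * cs.simple j := by
        rw [mul_assoc, pow_succ, ← mul_assoc]
        clear * -
        induction q with
        | zero => simp
        | succ q ih => rw [pow_succ', mul_assoc, mul_assoc, ← mul_assoc (_ ^ q), ih, pow_succ']
                       simp only [mul_assoc]
      rw [this]
      simp only [mul_assoc]
    · exact ⟨0, by omega, by simp⟩

theorem two_descents (hne : ∀ (i j : B), i ≠ j → ∀ n, 0 < n → n < M i j →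
      (cs.simple i * cs.simple j) ^ n ≠ 1)
    (v : W) (p : ℕ) (i j : B) (hij : i ≠ j) (hp : p ≤ M i j)
    (hi : cs.IsRightDescent v i) (hj : cs.IsRightDescent v j) :
    ∃ ω : List B, v = cs.wordProd ω * cs.wordProd (CoxeterSystem.alternatingWord i j p) ∧
      cs.length v = ω.length + p := by
  induction p generalizing i j with
  | zero =>
    obtain ⟨ω, hr, rfl⟩ := cs.exists_isReduced v
    exact ⟨ω, by simp [CoxeterSystem.alternatingWord], hr⟩
  | succ p ih =>
    obtain ⟨ω, hv, hl⟩ := ih j i hij.symm (by rw [M.symmetric]; omega) hj hi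
    rw [← cs.wordProd_append] at hv
    rw [hv] at hj
    obtain ⟨n, hn, hg, he⟩ := exchange cs _ j hj
    by_cases hnω : n < ω.length
    · refine ⟨ω.eraseIdx n, ?_, ?_⟩
      · rw [List.eraseIdx_append_of_lt_length hnω, ← hv, cs.wordProd_append] at he
        rw [CoxeterSystem.alternatingWord_succ, cs.wordProd_concat, ← mul_assoc, ← he]
        simp
      · rw [hl, ← List.length_eraseIdx_add_one hnω]; ring
    · exfalso
      rw [not_lt] at hnω
      rw [List.eraseIdx_append_of_length_le hnω, cs.wordProd_append, cs.wordProd_append,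
        mul_assoc, mul_right_inj, ← cs.wordProd_mul_getD_rightInvSeq, mul_right_inj] at he
      have hlen : n - ω.length <
          (cs.rightInvSeq (CoxeterSystem.alternatingWord j i p)).length := by
        simp at hn ⊢; omega
      rw [List.getD_eq_getElem _ 1 hlen] at he
      obtain ⟨q, hq, hq'⟩ := mem_ris_alternating cs j i p _ (List.getElem_mem hlen)
      rw [← he] at hq'
      apply hne j i hij.symm (q + 1) (by omega) (by rw [M.symmetric]; omega)
      rw [pow_succ', mul_assoc, ← hq', cs.simple_mul_simple_self]

theorem alt_pow_even (i a : B) (q : ℕ) :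
    cs.wordProd (CoxeterSystem.alternatingWord i a (2 * q)) = (cs.simple i * cs.simple a) ^ q := by
  rw [cs.prod_alternatingWord_eq_mul_pow]
  simp

theorem conj_generation (h0 : ∀ i j, M i j ≠ 0)
    (hne : ∀ (i j : B), i ≠ j → ∀ n, 0 < n → n < M i j →
      (cs.simple i * cs.simple j) ^ n ≠ 1)
    (G : B → B → W → Prop)
    (hone : ∀ i, G i i 1) (hs : ∀ i, G i i (cs.simple i))
    (hmul : ∀ i j k u w, G i j u → G j k w → G i k (w * u))
    (heven : ∀ i a q, i ≠ a → M i a = 2 * q → G i i ((cs.simple i * cs.simple a) ^ q))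
    (hodd : ∀ i a q, i ≠ a → M i a = 2 * q + 1 → G i a ((cs.simple i * cs.simple a) ^ q))
    (i j : B) (w : W) (hw : w * cs.simple i = cs.simple j * w) : G i j w := by
  have hge2 : ∀ i j, i ≠ j → 2 ≤ M i j := by
    intro i j hij
    have := M.off_diagonal i j hij
    have := h0 i j
    omega
  have main : ∀ n, ∀ (i : B) (w : W), cs.length w = n → w * cs.simple i = cs.simple j * w →
      ¬ cs.IsRightDescent w i → G i j w := by
    intro n
    induction n using Nat.strong_induction_on with
    | _ n ih =>
    intro i w hn hw hd
    by_cases hw1 : w = 1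
    · subst hw1
      have hij : i = j := by
        by_contra hij
        apply hne i j hij 1 one_pos (hge2 i j hij)
        rw [one_mul, mul_one] at hw
        rw [hw, pow_one, cs.simple_mul_simple_self]
      subst hij
      exact hone i
    obtain ⟨a, ha⟩ := cs.exists_rightDescent_of_ne_one hw1
    have hai : a ≠ i := by rintro rfl; exact hd ha
    have hv : cs.length (w * cs.simple i) = cs.length w + 1 := cs.not_isRightDescent_iff.mp hd
    have hvi : cs.IsRightDescent (w * cs.simple i) i := by
      rw [CoxeterSystem.IsRightDescent, cs.simple_mul_simple_cancel_right, hv]; omega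
    have hva : cs.IsRightDescent (w * cs.simple i) a := by
      rw [CoxeterSystem.IsRightDescent, hv, hw, mul_assoc]
      have h1 := cs.length_mul_le (cs.simple j) (w * cs.simple a)
      rw [cs.length_simple] at h1
      have h2 : cs.length (w * cs.simple a) < cs.length w := ha
      omega
    obtain ⟨ω, hx, hl⟩ := two_descents cs hne (w * cs.simple i) (M a i) a i hai le_rfl hva hvi
    have hM2 := hge2 a i hai
    obtain ⟨p, hp⟩ : ∃ p, M a i = p + 1 := ⟨M a i - 1, by omega⟩
    have hMi : M i a = p + 1 := by rw [M.symmetric, hp]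
    rw [hp, CoxeterSystem.alternatingWord_succ, cs.wordProd_concat, ← mul_assoc,
      mul_left_inj] at hx
    set x := cs.wordProd ω with hxdef
    have hlx : cs.length x ≤ ω.length := cs.length_wordProd_le ω
    set u := cs.wordProd (CoxeterSystem.alternatingWord i a p) with hu
    have hlu : cs.length u ≤ p := by
      simpa using cs.length_wordProd_le (CoxeterSystem.alternatingWord i a p)
    have hlw : cs.length w = ω.length + p := by omega
    have hlx' : cs.length x = ω.length := by
      have := cs.length_mul_le x u
      rw [← hx] at this
      omega
    -- descent transfer
    have htransfer : ∀ b, u * cs.simple i = cs.simple b * u → G i b u → G i j w := by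
      intro b hb hG
      have hxb : x * cs.simple b = cs.simple j * x := by
        have : x * cs.simple b * u = cs.simple j * x * u := by
          rw [mul_assoc, ← hb, ← mul_assoc, ← hx, hw, hx, mul_assoc]
        exact mul_right_cancel this
      have hnd : ¬ cs.IsRightDescent x b := by
        intro hdb
        have e : w * cs.simple i = (x * cs.simple b) * u := by
          rw [hx, mul_assoc, hb, mul_assoc]
        have := cs.length_mul_le (x * cs.simple b) u
        rw [← e] at this
        have h2 : cs.length (x * cs.simple b) < cs.length x := hdb
        omega
      have := ih (cs.length x) (by omega) b x rfl hxb hnd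
      rw [hx]
      exact hmul i b j u x hG this
    obtain ⟨q, hq | hq⟩ := Nat.even_or_odd' p
    · -- odd order
      have hue : u = (cs.simple i * cs.simple a) ^ q := by rw [hu, hq, alt_pow_even]
      apply htransfer a
      · have hM : (cs.simple a * cs.simple i) ^ (2 * q + 1) = 1 := by
          rw [← hq, ← hp, cs.simple_mul_simple_pow]
        have hinv : ((cs.simple a * cs.simple i) ^ q)⁻¹ = (cs.simple i * cs.simple a) ^ q := by
          rw [← inv_pow, mul_inv_rev, cs.inv_simple, cs.inv_simple]
        have h1 : (cs.simple a * cs.simple i) ^ (q + 1) = (cs.simple i * cs.simple a) ^ q := by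
          rw [← hinv, eq_inv_iff_mul_eq_one, ← pow_add, ← hM]; congr 1; ring
        have h2 : cs.simple a * (cs.simple i * cs.simple a) ^ q * cs.simple i =
            (cs.simple a * cs.simple i) ^ (q + 1) := by
          clear * -
          induction q with
          | zero => simp
          | succ q ih =>
            rw [pow_succ' _ (q + 1), ← ih, pow_succ']
            simp only [mul_assoc]
        rw [hue]
        rw [h1] at h2
        calc _ = cs.simple a * (cs.simple i * cs.simple a) ^ q * cs.simple i * cs.simple i := by
              rw [h2]
          _ = _ := by simp
      · rw [hue]
        exact hodd i a q hai.symm (by omega)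
    · -- even order
      have hM : (cs.simple i * cs.simple a) ^ (2 * (q + 1)) = 1 := by
        rw [← cs.simple_mul_simple_pow i a, hMi, hq]; congr 1
      have hue : u = (cs.simple i * cs.simple a) ^ (q + 1) * cs.simple i := by
        have h1 : u * cs.simple i = (cs.simple a * cs.simple i) ^ (q + 1) := by
          rw [← alt_pow_even, show 2 * (q + 1) = p + 1 by omega,
            CoxeterSystem.alternatingWord_succ, cs.wordProd_concat]
        have h2 : (cs.simple a * cs.simple i) ^ (q + 1) = (cs.simple i * cs.simple a) ^ (q + 1) := by
          have hinv : ((cs.simple i * cs.simple a) ^ (q + 1))⁻¹ =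
              (cs.simple a * cs.simple i) ^ (q + 1) := by
            rw [← inv_pow, mul_inv_rev, cs.inv_simple, cs.inv_simple]
          rw [← hinv, inv_eq_iff_mul_eq_one, ← pow_add, ← hM]; congr 1; ring
        rw [← h2, ← h1]; simp
      apply htransfer i
      · have hinv : ((cs.simple i * cs.simple a) ^ (q + 1))⁻¹ =
            cs.simple i * (cs.simple i * cs.simple a) ^ (q + 1) * (cs.simple i)⁻¹ := by
          rw [← conj_pow, ← inv_pow, mul_inv_rev, cs.inv_simple, cs.inv_simple]
          simp
        have hself : ((cs.simple i * cs.simple a) ^ (q + 1))⁻¹ =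
            (cs.simple i * cs.simple a) ^ (q + 1) := by
          rw [inv_eq_iff_mul_eq_one, ← pow_add, ← hM]; congr 1; ring
        rw [hself, cs.inv_simple] at hinv
        rw [hue, ← mul_assoc, ← hinv]
        simp
      · rw [hue]
        exact hmul i i i _ _ (hs i) (heven i a (q + 1) hai.symm (by omega))
  by_cases hd : cs.IsRightDescent w i
  · have hd' := (cs.isRightDescent_iff_not_isRightDescent_mul).mp hd
    have := main _ i (w * cs.simple i) rfl (by rw [hw, mul_assoc, hw]) hd'
    have h := hmul i i j _ _ (hs i) this
    simpa using h
  · exact main _ i w rfl hw hd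

end Exchange

section TriGroup

/-- The Coxeter matrix of `Δ(2k, 2l, 2m+1)`. -/
def triMat (k l m : ℕ) (hm : 1 ≤ m) : CoxeterMatrix (Fin 3) where
  M := !![1, 2 * k, 2 * m + 1; 2 * k, 1, 2 * l; 2 * m + 1, 2 * l, 1]
  isSymm := by
    ext i j
    fin_cases i <;> fin_cases j <;> rfl
  diagonal i := by fin_cases i <;> rfl
  off_diagonal i j hij := by
    fin_cases i <;> fin_cases j <;> simp at hij ⊢ <;> omega

theorem cgen_sq (k' l' m' : ℕ) (j : Fin 3) : cgen k' l' m' j * cgen k' l' m' j = 1 := by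
  have : (QuotientGroup.mk (FreeGroup.of j ^ 2) : PresentedGroup (triRels k' l' m')) = 1 := by
    apply PresentedGroup.one_of_mem
    fin_cases j <;> simp [triRels]
  rw [← sq]
  exact this

theorem cgen_01 (k' l' m' : ℕ) : (cgen k' l' m' 0 * cgen k' l' m' 1) ^ k' = 1 :=
  PresentedGroup.one_of_mem (rels := triRels k' l' m')
    (x := (FreeGroup.of 0 * FreeGroup.of 1) ^ k') (by simp [triRels])

theorem cgen_12 (k' l' m' : ℕ) : (cgen k' l' m' 1 * cgen k' l' m' 2) ^ l' = 1 :=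
  PresentedGroup.one_of_mem (rels := triRels k' l' m')
    (x := (FreeGroup.of 1 * FreeGroup.of 2) ^ l') (by simp [triRels])

theorem cgen_20 (k' l' m' : ℕ) : (cgen k' l' m' 2 * cgen k' l' m' 0) ^ m' = 1 :=
  PresentedGroup.one_of_mem (rels := triRels k' l' m')
    (x := (FreeGroup.of 2 * FreeGroup.of 0) ^ m') (by simp [triRels])

theorem swap_pow {G : Type*} [Group G] (a b : G) (ha : a * a = 1) (hb : b * b = 1) (n : ℕ) :
    ((a * b) ^ n)⁻¹ = (b * a) ^ n := by
  rw [← inv_pow, mul_inv_rev, inv_eq_of_mul_eq_one_left ha, inv_eq_of_mul_eq_one_left hb]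

theorem cgen_rel (k l m : ℕ) (hm : 1 ≤ m) (i j : Fin 3) :
    (cgen (2 * k) (2 * l) (2 * m + 1) i * cgen (2 * k) (2 * l) (2 * m + 1) j) ^
      (triMat k l m hm i j) = 1 := by
  have hs := cgen_sq (2 * k) (2 * l) (2 * m + 1)
  have sw : ∀ (i j : Fin 3) (n : ℕ),
      (cgen (2 * k) (2 * l) (2 * m + 1) i * cgen (2 * k) (2 * l) (2 * m + 1) j) ^ n = 1 →
      (cgen (2 * k) (2 * l) (2 * m + 1) j * cgen (2 * k) (2 * l) (2 * m + 1) i) ^ n = 1 := by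
    intro i j n h
    rw [← swap_pow _ _ (hs i) (hs j), h, inv_one]
  have h01 := cgen_01 (2 * k) (2 * l) (2 * m + 1)
  have h12 := cgen_12 (2 * k) (2 * l) (2 * m + 1)
  have h20 := cgen_20 (2 * k) (2 * l) (2 * m + 1)
  fin_cases i <;> fin_cases j
  · exact (pow_one _).trans (hs 0)
  · exact h01
  · exact sw _ _ _ h20
  · exact sw _ _ _ h01
  · exact (pow_one _).trans (hs 1)
  · exact h12
  · exact h20
  · exact sw _ _ _ h12
  · exact (pow_one _).trans (hs 2)

/-- Map from `Δ` to the Coxeter group. -/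
def triTo (k l m : ℕ) (hm : 1 ≤ m) :
    Tri (2 * k) (2 * l) (2 * m + 1) →* (triMat k l m hm).Group :=
  PresentedGroup.toGroup (rels := triRels (2 * k) (2 * l) (2 * m + 1))
    (f := (triMat k l m hm).simple) (by
      have hp : ∀ i j, ((triMat k l m hm).simple i * (triMat k l m hm).simple j) ^
          (triMat k l m hm i j) = 1 := fun i j =>
        (triMat k l m hm).toCoxeterSystem.simple_mul_simple_pow i j
      have hq : ∀ i, ((triMat k l m hm).simple i) ^ 2 = 1 := fun i =>
        (triMat k l m hm).toCoxeterSystem.simple_sq i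
      intro r hr
      simp only [triRels, Set.mem_insert_iff, Set.mem_singleton_iff] at hr
      rcases hr with rfl | rfl | rfl | rfl | rfl | rfl <;>
        simp only [map_pow, map_mul, FreeGroup.lift_apply_of]
      · exact hq 0
      · exact hq 1
      · exact hq 2
      · exact hp 0 1
      · exact hp 1 2
      · exact hp 2 0)

/-- Map from the Coxeter group to `Δ`. -/
def triFrom (k l m : ℕ) (hm : 1 ≤ m) :
    (triMat k l m hm).Group →* Tri (2 * k) (2 * l) (2 * m + 1) :=
  PresentedGroup.toGroup (rels := (triMat k l m hm).relationsSet)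
    (f := cgen (2 * k) (2 * l) (2 * m + 1)) (by
      rintro _ ⟨⟨i, j⟩, rfl⟩
      simp only [Function.uncurry, CoxeterMatrix.relation, map_pow, map_mul,
        FreeGroup.lift_apply_of]
      exact cgen_rel k l m hm i j)

theorem triTo_gen (k l m : ℕ) (hm : 1 ≤ m) (j : Fin 3) :
    triTo k l m hm (cgen _ _ _ j) = (triMat k l m hm).simple j :=
  PresentedGroup.toGroup.of _

theorem triFrom_gen (k l m : ℕ) (hm : 1 ≤ m) (j : Fin 3) :
    triFrom k l m hm ((triMat k l m hm).simple j) = cgen _ _ _ j :=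
  PresentedGroup.toGroup.of _

/-- `Δ` is a Coxeter group. -/
def triEquiv (k l m : ℕ) (hm : 1 ≤ m) :
    Tri (2 * k) (2 * l) (2 * m + 1) ≃* (triMat k l m hm).Group :=
  MonoidHom.toMulEquiv (triTo k l m hm) (triFrom k l m hm)
    (by
      refine PresentedGroup.ext (rels := triRels (2 * k) (2 * l) (2 * m + 1)) ?_
      intro j
      change triFrom k l m hm (triTo k l m hm (cgen _ _ _ j)) = cgen _ _ _ j
      rw [triTo_gen, triFrom_gen])
    (by
      refine PresentedGroup.ext (rels := (triMat k l m hm).relationsSet) ?_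
      intro j
      change triTo k l m hm (triFrom k l m hm ((triMat k l m hm).simple j)) =
        (triMat k l m hm).simple j
      rw [triFrom_gen, triTo_gen])

/-- The Coxeter system on `Δ`. -/
def triCS (k l m : ℕ) (hm : 1 ≤ m) :
    CoxeterSystem (triMat k l m hm) (Tri (2 * k) (2 * l) (2 * m + 1)) :=
  ⟨triEquiv k l m hm⟩

theorem triCS_simple (k l m : ℕ) (hm : 1 ≤ m) (j : Fin 3) :
    (triCS k l m hm).simple j = cgen _ _ _ j :=
  triFrom_gen k l m hm j

end TriGroup

/-- in `Δ(2k, 2l, 2m+1)` (first two link periods even, third odd),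
`c₀` is conjugate to `c₂`, the centralizer of `c₀` is generated by `c₀`, `(c₀c₁)^k`, and
`(c₂c₀)^m (c₂c₁)^l (c₀c₂)^m`, and the centralizer of `c₁` is generated by `c₁`,
`(c₀c₁)^k`, and `(c₁c₂)^l`. -/
theorem centralizer_even_even_odd (k l m : ℕ) (hk : 1 ≤ k) (hl : 1 ≤ l) (hm : 1 ≤ m)
    (harea : (1 : ℚ) / (2 * k) + 1 / (2 * l) + 1 / (2 * m + 1) < 1) :
    ∀ c₀ c₁ c₂ : Tri (2 * k) (2 * l) (2 * m + 1),
      c₀ = cgen _ _ _ 0 → c₁ = cgen _ _ _ 1 → c₂ = cgen _ _ _ 2 →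
      IsConj c₀ c₂ ∧
      Subgroup.centralizer {c₀} =
        Subgroup.closure {c₀, (c₀ * c₁) ^ k,
          (c₂ * c₀) ^ m * (c₂ * c₁) ^ l * (c₀ * c₂) ^ m} ∧
      Subgroup.centralizer {c₁} =
        Subgroup.closure {c₁, (c₀ * c₁) ^ k, (c₁ * c₂) ^ l} := by
  intro c₀ c₁ c₂ h0 h1 h2
  set M := triMat k l m hm with hM
  set cs := triCS k l m hm with hcs
  have s0 : cs.simple 0 = c₀ := by rw [h0]; exact triCS_simple k l m hm 0
  have s1 : cs.simple 1 = c₁ := by rw [h1]; exact triCS_simple k l m hm 1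
  have s2 : cs.simple 2 = c₂ := by rw [h2]; exact triCS_simple k l m hm 2
  have q0 : c₀ * c₀ = 1 := by rw [h0]; exact cgen_sq _ _ _ _
  have q1 : c₁ * c₁ = 1 := by rw [h1]; exact cgen_sq _ _ _ _
  have q2 : c₂ * c₂ = 1 := by rw [h2]; exact cgen_sq _ _ _ _
  have r01 : (c₀ * c₁) ^ (2 * k) = 1 := by rw [h0, h1]; exact cgen_01 _ _ _
  have r12 : (c₁ * c₂) ^ (2 * l) = 1 := by rw [h1, h2]; exact cgen_12 _ _ _
  have r20 : (c₂ * c₀) ^ (2 * m + 1) = 1 := by rw [h2, h0]; exact cgen_20 _ _ _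
  clear_value cs
  clear h0 h1 h2
  have i0 : c₀⁻¹ = c₀ := inv_eq_of_mul_eq_one_left q0
  have i1 : c₁⁻¹ = c₁ := inv_eq_of_mul_eq_one_left q1
  have i2 : c₂⁻¹ = c₂ := inv_eq_of_mul_eq_one_left q2
  -- central element of an even dihedral group
  have half : ∀ (a b : Tri (2 * k) (2 * l) (2 * m + 1)) (n : ℕ), a * a = 1 → b * b = 1 →
      (a * b) ^ (2 * n) = 1 → (a * b) ^ n = (b * a) ^ n ∧ a * (a * b) ^ n = (a * b) ^ n * a := by
    intro a b n ha hb hn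
    have e1 : (a * b) ^ n = (b * a) ^ n := by
      rw [← swap_pow a b ha hb, eq_inv_iff_mul_eq_one, ← pow_add, ← two_mul, hn]
    refine ⟨e1, ?_⟩
    have ia : a⁻¹ = a := inv_eq_of_mul_eq_one_left ha
    have e2 : a * (a * b) ^ n * a⁻¹ = (b * a) ^ n := by
      rw [← conj_pow, ia, ← mul_assoc, ha, one_mul]
    rw [← e1, mul_inv_eq_iff_eq_mul] at e2
    exact e2
  have e01 := half c₀ c₁ k q0 q1 r01
  have e12 := half c₁ c₂ l q1 q2 r12
  have r10 : (c₁ * c₀) ^ (2 * k) = 1 := by rw [← swap_pow _ _ q0 q1, r01, inv_one]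
  have r21 : (c₂ * c₁) ^ (2 * l) = 1 := by rw [← swap_pow _ _ q1 q2, r12, inv_one]
  have e10 := half c₁ c₀ k q1 q0 r10
  have e21 := half c₂ c₁ l q2 q1 r21
  set d := (c₂ * c₀) ^ m with hd
  have di : d⁻¹ = (c₀ * c₂) ^ m := swap_pow _ _ q2 q0 m
  -- `d` conjugates `c₂` to `c₀`
  have hdc : d * c₂ = c₀ * d := by
    have f1 : c₀ * d * c₀⁻¹ = (c₀ * c₂) ^ m := by
      rw [hd, ← conj_pow, mul_assoc, mul_assoc, mul_inv_cancel, mul_one]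
    rw [← di] at f1
    have f2 : c₀ * d = d⁻¹ * c₀ := by rw [← f1]; group
    rw [f2, eq_inv_mul_iff_mul_eq, ← mul_assoc, hd, ← pow_add, ← two_mul]
    calc (c₂ * c₀) ^ (2 * m) * c₂ = (c₂ * c₀) ^ (2 * m) * (c₂ * c₀) * c₀⁻¹ := by group
      _ = c₀ := by rw [← pow_succ, r20, one_mul, i0]
  rw [← di]
  set H0 := Subgroup.closure {c₀, (c₀ * c₁) ^ k, d * (c₂ * c₁) ^ l * d⁻¹} with hH0
  set H1 := Subgroup.closure {c₁, (c₀ * c₁) ^ k, (c₁ * c₂) ^ l} with hH1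
  have m00 : c₀ ∈ H0 := Subgroup.subset_closure (by simp)
  have m01 : (c₀ * c₁) ^ k ∈ H0 := Subgroup.subset_closure (by simp)
  have m02 : d * (c₂ * c₁) ^ l * d⁻¹ ∈ H0 := Subgroup.subset_closure (by simp)
  have m10 : c₁ ∈ H1 := Subgroup.subset_closure (by simp)
  have m11 : (c₀ * c₁) ^ k ∈ H1 := Subgroup.subset_closure (by simp)
  have m12 : (c₁ * c₂) ^ l ∈ H1 := Subgroup.subset_closure (by simp)
  have hM0 : ∀ i j, M i j ≠ 0 := by
    intro i j
    fin_cases i <;> fin_cases j <;> simp [hM, triMat] <;> omega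
  let D : Fin 3 → Tri (2 * k) (2 * l) (2 * m + 1) := ![1, 1, d]
  let G : Fin 3 → Fin 3 → Tri (2 * k) (2 * l) (2 * m + 1) → Prop := fun i j w =>
    (i = 1 ∧ j = 1 ∧ w ∈ H1) ∨ (i ≠ 1 ∧ j ≠ 1 ∧ D j * w * (D i)⁻¹ ∈ H0)
  have key : ∀ i j w, w * cs.simple i = cs.simple j * w → G i j w := by
    intro i j w hw
    refine conj_generation cs hM0 (simple_pow_ne cs hM0) G ?_ ?_ ?_ ?_ ?_ i j w hw
    · intro i
      by_cases hi : i = 1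
      · exact Or.inl ⟨hi, hi, one_mem _⟩
      · refine Or.inr ⟨hi, hi, ?_⟩
        simp
    · intro i
      fin_cases i
      · refine Or.inr ⟨by decide, by decide, ?_⟩
        simpa [D, s0] using m00
      · refine Or.inl ⟨by decide, by decide, ?_⟩
        simpa [s1] using m10
      · refine Or.inr ⟨by decide, by decide, ?_⟩
        simpa [D, s2, hdc] using m00
    · rintro i j n u w (⟨a1, a2, a3⟩ | ⟨a1, a2, a3⟩) (⟨b1, b2, b3⟩ | ⟨b1, b2, b3⟩)
      · exact Or.inl ⟨a1, b2, mul_mem b3 a3⟩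
      · exact absurd a2 b1
      · exact absurd b1 a2
      · refine Or.inr ⟨a1, b2, ?_⟩
        have := mul_mem b3 a3
        convert this using 1
        group
    · intro i a q hia hq
      fin_cases i <;> fin_cases a <;> first | exact absurd rfl hia | skip
      · have : q = k := by simp [hM, triMat] at hq; omega
        subst this
        refine Or.inr ⟨by decide, by decide, ?_⟩
        simpa [D, s0, s1] using m01
      · exfalso; simp [hM, triMat] at hq; omega
      · have : q = k := by simp [hM, triMat] at hq; omega
        subst this
        refine Or.inl ⟨by decide, by decide, ?_⟩
        simpa [s0, s1, ← e01.1] using m11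
      · have : q = l := by simp [hM, triMat] at hq; omega
        subst this
        refine Or.inl ⟨by decide, by decide, ?_⟩
        simpa [s1, s2] using m12
      · exfalso; simp [hM, triMat] at hq; omega
      · have : q = l := by simp [hM, triMat] at hq; omega
        subst this
        refine Or.inr ⟨by decide, by decide, ?_⟩
        simpa [D, s1, s2] using m02
    · intro i a q hia hq
      fin_cases i <;> fin_cases a <;> first | exact absurd rfl hia | skip
      · exfalso; simp [hM, triMat] at hq; omega
      · have : q = m := by simp [hM, triMat] at hq; omega
        subst this
        refine Or.inr ⟨by decide, by decide, ?_⟩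
        simp [D, s0, s2, ← di]
      · exfalso; simp [hM, triMat] at hq; omega
      · exfalso; simp [hM, triMat] at hq; omega
      · have : q = m := by simp [hM, triMat] at hq; omega
        subst this
        refine Or.inr ⟨by decide, by decide, ?_⟩
        simp [D, s0, s2, ← hd]
      · exfalso; simp [hM, triMat] at hq; omega
  refine ⟨?_, le_antisymm ?_ ?_, le_antisymm ?_ ?_⟩
  · apply IsConj.symm
    rw [isConj_iff]
    exact ⟨d, by rw [hdc]; group⟩
  · intro w hw
    rw [Subgroup.mem_centralizer_singleton_iff] at hw
    rcases key 0 0 w (by rw [s0, hw]) with ⟨h, -⟩ | ⟨-, -, h⟩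
    · exact absurd h (by decide)
    · simpa [D] using h
  · rw [hH0, Subgroup.closure_le]
    rintro x (rfl | rfl | rfl) <;> rw [SetLike.mem_coe, Subgroup.mem_centralizer_singleton_iff]
    · exact e01.2.symm
    · have f1 : c₀ = d * c₂ * d⁻¹ := by rw [hdc]; group
      rw [f1]
      calc _ = d * ((c₂ * c₁) ^ l * c₂) * d⁻¹ := by group
        _ = d * (c₂ * (c₂ * c₁) ^ l) * d⁻¹ := by rw [e21.2]
        _ = _ := by group
  · intro w hw
    rw [Subgroup.mem_centralizer_singleton_iff] at hw
    rcases key 1 1 w (by rw [s1, hw]) with ⟨-, -, h⟩ | ⟨h, -⟩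
    · exact h
    · exact absurd rfl h
  · rw [hH1, Subgroup.closure_le]
    rintro x (rfl | rfl | rfl) <;> rw [SetLike.mem_coe, Subgroup.mem_centralizer_singleton_iff]
    · rw [e01.1]; exact e10.2.symm
    · exact e12.2.symm
end

section
/- Let k, l, m ≥ 1 be integers with 1/(2k) + 1/(2l) + 1/(2m) < 1, and let Δ = Δ(2k, 2l, 2m) with canonical generators c₀, c₁, c₂ (so all three link periods are even). Then the centralizer of c₀ in Δ equals the subgroup generated by c₀, (c₀c₁)^k, and (c₀c₂)^m; the centralizer of c₁ in Δ equals the subgroup generated by c₁, (c₀c₁)^k, and (c₁c₂)^l; and the centralizer of c₂ in Δ equals the subgroup generated by c₂, (c₀c₂)^m, and (c₁c₂)^l. -/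
namespace EvenCox

open CoxeterSystem

variable {B W : Type*} [Group W] {M : CoxeterMatrix B} (cs : CoxeterSystem M W)

open Classical in
/-- The indicator of equality with values in `ZMod 2`. -/
noncomputable def ind {X : Type*} (a b : X) : ZMod 2 := if a = b then 1 else 0

/-- The action of a simple reflection on `W × ZMod 2`. -/
noncomputable def act (i : B) : Function.End (W × ZMod 2) :=
  fun x => (cs.simple i * x.1 * (cs.simple i)⁻¹, x.2 + ind x.1 (cs.simple i))

theorem ind_congr {X : Type*} {a b c d : X} (h : a = b ↔ c = d) : ind a b = ind c d := by
  classical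
  unfold ind
  simp only [h]

theorem act_pow (i j : B) (n : ℕ) (x : W × ZMod 2) :
    ((act cs i * act cs j) ^ n : Function.End (W × ZMod 2)) x =
      ((cs.simple i * cs.simple j) ^ n * x.1 * ((cs.simple i * cs.simple j) ^ n)⁻¹,
        x.2 + ∑ q ∈ Finset.range (2 * n),
          ind x.1 (((cs.simple i * cs.simple j) ^ q)⁻¹ * cs.simple j)) := by
  have hi := cs.simple_mul_simple_self i
  have hj := cs.simple_mul_simple_self j
  have hii := cs.inv_simple i
  have hji := cs.inv_simple j
  have hconj : ∀ q : ℕ, cs.simple j * (cs.simple i * cs.simple j) ^ q =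
      ((cs.simple i * cs.simple j) ^ q)⁻¹ * cs.simple j := by
    intro q
    have : (cs.simple j) * (cs.simple i * cs.simple j) * (cs.simple j)⁻¹ =
        (cs.simple i * cs.simple j)⁻¹ := by
      simp [mul_assoc]
    rw [← inv_pow, ← this, conj_pow]
    simp
  induction n with
  | zero => simp; rfl
  | succ n ih =>
    rw [pow_succ', show ((act cs i * act cs j) * (act cs i * act cs j) ^ n :
      Function.End (W × ZMod 2)) x = act cs i (act cs j (((act cs i * act cs j) ^ n :
      Function.End (W × ZMod 2)) x)) from rfl, ih]
    unfold act
    ext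
    · simp only [pow_succ', mul_inv_rev, mul_assoc]
    · simp only
      rw [show 2 * (n + 1) = 2 * n + 1 + 1 by ring, Finset.sum_range_succ, Finset.sum_range_succ]
      generalize (∑ q ∈ Finset.range (2 * n),
          ind x.1 (((cs.simple i * cs.simple j) ^ q)⁻¹ * cs.simple j)) = S
      rw [add_assoc, add_assoc, add_assoc, ← add_assoc S]
      rw [add_assoc S]
      congr 3
      · apply ind_congr
        have h := hconj n
        set p := cs.simple i * cs.simple j
        rw [two_mul, pow_add, mul_inv_rev, mul_inv_eq_iff_eq_mul, h,
          ← eq_inv_mul_iff_mul_eq, mul_assoc]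
      · apply ind_congr
        have h := hconj n
        have h1 := hconj 1
        have e : cs.simple j * cs.simple i * cs.simple j = 
          (cs.simple i * cs.simple j)⁻¹ * cs.simple j := by simp [mul_assoc]
        have e2 : ∀ y, cs.simple j * y * (cs.simple j)⁻¹ = cs.simple i ↔
            y = cs.simple j * cs.simple i * cs.simple j := by
          intro y
          rw [mul_inv_eq_iff_eq_mul, ← eq_inv_mul_iff_mul_eq, hji, mul_assoc]
        rw [e2, e]
        set p := cs.simple i * cs.simple j
        rw [mul_inv_eq_iff_eq_mul, mul_assoc, h, ← eq_inv_mul_iff_mul_eq]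
        rw [show (p ^ (2 * n + 1))⁻¹ * cs.simple j = (p ^ n)⁻¹ * (p⁻¹ * ((p ^ n)⁻¹ * cs.simple j)) by
          rw [show 2 * n + 1 = n + 1 + n by ring, pow_add, pow_succ]; group]

theorem act_liftable : M.IsLiftable (act cs) := by
  intro i j
  funext x
  rw [act_pow]
  have hp := cs.simple_mul_simple_pow i j
  rw [two_mul, Finset.sum_range_add]
  simp only [pow_add, hp, one_mul, inv_one, mul_one]
  rw [CharTwo.add_self_eq_zero]
  simp
  rfl

/-- The lifted action. -/
noncomputable def rho : W →* Function.End (W × ZMod 2) := cs.lift ⟨act cs, act_liftable cs⟩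

/-- The reflection cocycle. -/
noncomputable def eta (w t : W) : ZMod 2 := (rho cs w (t, 0)).2

theorem rho_simple (i : B) : rho cs (cs.simple i) = act cs i :=
  cs.lift_apply_simple (act_liftable cs) i

theorem rho_apply (w : W) : ∀ t e, rho cs w (t, e) = (w * t * w⁻¹, e + eta cs w t) := by
  have key : ∀ t, (rho cs w (t, 0)).1 = w * t * w⁻¹ ∧
      ∀ e, rho cs w (t, e) = ((rho cs w (t, 0)).1, e + (rho cs w (t, 0)).2) := by
    induction w using cs.simple_induction_left with
    | one =>
      intro t
      have h1 : ∀ x, rho cs 1 x = x := by intro x; rw [map_one]; rfl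
      simp [h1]
    | mul_simple_left w i ih =>
      intro t
      obtain ⟨h1, h2⟩ := ih t
      have hm : ∀ x, rho cs (cs.simple i * w) x = act cs i (rho cs w x) := by
        intro x; rw [map_mul, rho_simple]; rfl
      refine ⟨?_, fun e => ?_⟩
      · rw [hm]; simp only [act, h1]; group
      · rw [hm, hm, h2 e]; simp only [act, add_assoc]
  intro t e
  rw [(key t).2 e, (key t).1]
  rfl

theorem eta_mul (w v t : W) : eta cs (w * v) t = eta cs v t + eta cs w (v * t * v⁻¹) := by
  have : rho cs (w * v) (t, 0) = rho cs w (rho cs v (t, 0)) := by rw [map_mul]; rfl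
  unfold eta
  rw [this, rho_apply cs v t 0, rho_apply]
  simp [eta]

theorem eta_one (t : W) : eta cs 1 t = 0 := by
  unfold eta
  rw [map_one]
  rfl

theorem eta_simple (i : B) (t : W) : eta cs (cs.simple i) t = ind t (cs.simple i) := by
  simp [eta, rho_simple, act]

theorem ind_self {X : Type*} (a : X) : ind a a = 1 := by simp [ind]
theorem ind_ne {X : Type*} {a b : X} (h : a ≠ b) : ind a b = 0 := by simp [ind, h]

theorem exchange (ω : List B) (t : W) (h : eta cs (cs.wordProd ω) t = 1) :
    ∃ ω' : List B, ω'.Sublist ω ∧ ω'.length < ω.length ∧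
      cs.wordProd ω' = cs.wordProd ω * t := by
  induction ω with
  | nil => simp [eta_one] at h
  | cons i ω ih =>
    rw [cs.wordProd_cons, eta_mul, eta_simple] at h
    by_cases hc : cs.wordProd ω * t * (cs.wordProd ω)⁻¹ = cs.simple i
    · refine ⟨ω, by simp, by simp, ?_⟩
      rw [mul_inv_eq_iff_eq_mul] at hc
      rw [cs.wordProd_cons, mul_assoc, hc]
      simp
    · rw [ind_ne hc, add_zero] at h
      obtain ⟨ω', h1, h2, h3⟩ := ih h
      refine ⟨i :: ω', by simpa using h1, by simpa using h2, ?_⟩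
      rw [cs.wordProd_cons, cs.wordProd_cons, h3, mul_assoc]

theorem length_lt_of_eta {w t : W} (h : eta cs w t = 1) : cs.length (w * t) < cs.length w := by
  obtain ⟨ω, hω, rfl⟩ := cs.exists_isReduced w
  obtain ⟨ω', h1, h2, h3⟩ := exchange cs ω t h
  rw [← h3, hω.eq]
  exact (cs.length_wordProd_le ω').trans_lt h2

theorem zmod_two_cases (a : ZMod 2) : a = 0 ∨ a = 1 := by
  revert a; decide

/-- An element of a rank two parabolic subgroup without descents there is trivial. -/
theorem eq_one_of_no_descent (i j : B) (x : W)
    (hx : x ∈ Subgroup.closure {cs.simple i, cs.simple j})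
    (h1 : eta cs x (cs.simple i) = 0) (h2 : eta cs x (cs.simple j) = 0) : x = 1 := by
  have hw : ∃ n : ℕ, ∃ ω : List B, ω.length = n ∧ (∀ b ∈ ω, b = i ∨ b = j) ∧
      cs.wordProd ω = x := by
    suffices ∃ ω : List B, (∀ b ∈ ω, b = i ∨ b = j) ∧ cs.wordProd ω = x by
      obtain ⟨ω, h⟩ := this
      exact ⟨_, ω, rfl, h⟩
    clear h1 h2
    induction hx using Subgroup.closure_induction with
    | mem x hx =>
      rcases hx with rfl | rfl
      · exact ⟨[i], by simp, by simp⟩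
      · exact ⟨[j], by simp, by simp⟩
    | one => exact ⟨[], by simp, by simp⟩
    | mul x y _ _ hx hy =>
      obtain ⟨a, ha, rfl⟩ := hx
      obtain ⟨b, hb, rfl⟩ := hy
      refine ⟨a ++ b, ?_, cs.wordProd_append a b⟩
      intro c hc
      rcases List.mem_append.1 hc with h | h
      · exact ha c h
      · exact hb c h
    | inv x _ hx =>
      obtain ⟨a, ha, rfl⟩ := hx
      exact ⟨a.reverse, by simpa using ha, by simp⟩
  classical
  obtain ⟨ω, hlen, hmem, hprod⟩ := Nat.find_spec hw
  have hmin := fun m => Nat.find_min hw (m := m)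
  rcases List.eq_nil_or_concat ω with rfl | ⟨ω', b, rfl⟩
  · simpa using hprod.symm
  · exfalso
    have hb : eta cs x (cs.simple b) = 0 := by
      rcases hmem b (by simp) with rfl | rfl <;> assumption
    rw [cs.wordProd_concat] at hprod
    rw [← hprod, eta_mul, eta_simple, ind_self] at hb
    simp only [mul_inv_cancel_right] at hb
    have h3 : eta cs (cs.wordProd ω') (cs.simple b) = 1 := by
      rcases zmod_two_cases (eta cs (cs.wordProd ω') (cs.simple b)) with h | h
      · rw [h] at hb; simp at hb
      · exact h
    obtain ⟨ω'', s1, s2, s3⟩ := exchange cs ω' _ h3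
    refine hmin ω''.length ?_ ⟨ω'', rfl, ?_, s3.trans hprod⟩
    · rw [← hlen]; simp; omega
    · intro c hc
      exact hmem c (by simp [s1.subset hc])

theorem simple_ne_one (i : B) : cs.simple i ≠ 1 := by
  intro h
  have h1 := eta_simple cs i (cs.simple i)
  rw [ind_self, h, eta_one] at h1
  simp at h1

section even
variable (K : B → B → ℕ) (hK : ∀ a b, a ≠ b → M a b = 2 * K a b)

include hK in
theorem not_conj {i j : B} (hij : i ≠ j) (v : W) :
    v * cs.simple i * v⁻¹ ≠ cs.simple j := by
  classical
  let f : B → ℤˣ := fun b => if b = i then -1 else 1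
  have hf : M.IsLiftable f := by
    intro a b
    by_cases hab : a = b
    · subst hab
      rw [M.diagonal, pow_one]
      exact Int.units_mul_self _
    · rw [hK a b hab, pow_mul, Int.units_sq, one_pow]
  intro h
  have h2 := congrArg (cs.lift ⟨f, hf⟩) h
  rw [map_mul, map_mul, map_inv, cs.lift_apply_simple hf, cs.lift_apply_simple hf,
    mul_comm, inv_mul_cancel_left] at h2
  simp [f, hij.symm] at h2

include hK in
theorem dvd_of_pow {i j : B} (hij : i ≠ j) (n : ℤ)
    (h : (cs.simple i * cs.simple j) ^ n = 1) : (M i j : ℤ) ∣ n := by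
  classical
  let f : B → DihedralGroup (M i j) := fun b => if b = i then .sr 0 else if b = j then .sr 1 else 1
  have hsq : ∀ b, f b * f b = 1 := by
    intro b
    simp only [f]
    split_ifs <;> simp
  have hf : M.IsLiftable f := by
    intro a b
    by_cases hab : a = b
    · subst hab
      rw [M.diagonal, pow_one, hsq]
    · by_cases ha : a = i ∨ a = j
      · by_cases hb : b = i ∨ b = j
        · rcases ha with rfl | rfl <;> rcases hb with rfl | rfl
          · exact absurd rfl hab
          · simp only [f, if_true, if_neg hij.symm]
            simp
          · have hs : M a b = M b a := M.symmetric a b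
            have h1 : ∀ n, n = M b a → (f a * f b) ^ n = 1 := by
              rintro n rfl
              have : f a * f b = (DihedralGroup.r 1)⁻¹ := by
                simp [f, hij.symm]
              rw [this, inv_pow]
              simp
            exact h1 _ hs
          · exact absurd rfl hab
        · have : f b = 1 := by
            push Not at hb
            simp [f, hb.1, hb.2]
          rw [this, mul_one, hK a b hab, pow_mul, sq, hsq, one_pow]
      · have : f a = 1 := by
            push Not at ha
            simp [f, ha.1, ha.2]
        rw [this, one_mul, hK a b hab, pow_mul, sq, hsq, one_pow]
  have h2 := congrArg (cs.lift ⟨f, hf⟩) h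
  rw [map_zpow, map_mul, cs.lift_apply_simple hf, cs.lift_apply_simple hf, map_one] at h2
  have h3 : f i * f j = DihedralGroup.r 1 := by simp [f, hij.symm]
  rw [h3, ← orderOf_dvd_iff_zpow_eq_one, DihedralGroup.orderOf_r_one] at h2
  exact h2

theorem conj_zpow_simple (i j : B) (n : ℤ) : cs.simple i * (cs.simple i * cs.simple j) ^ n =
    ((cs.simple i * cs.simple j) ^ n)⁻¹ * cs.simple i := by
  have : (cs.simple i) * (cs.simple i * cs.simple j) * (cs.simple i)⁻¹ =
      (cs.simple i * cs.simple j)⁻¹ := by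
    simp
  rw [← inv_zpow, ← this, conj_zpow]
  simp

theorem mem_dihedral (i j : B) (x : W)
    (hx : x ∈ Subgroup.closure {cs.simple i, cs.simple j}) :
    ∃ n : ℤ, x = (cs.simple i * cs.simple j) ^ n ∨
      x = (cs.simple i * cs.simple j) ^ n * cs.simple i := by
  have hc := conj_zpow_simple cs i j
  have hi := cs.simple_mul_simple_self i
  induction hx using Subgroup.closure_induction with
  | mem x hx =>
    rcases hx with rfl | rfl
    · exact ⟨0, Or.inr (by simp)⟩
    · exact ⟨-1, Or.inr (by simp)⟩
  | one => exact ⟨0, Or.inl (by simp)⟩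
  | mul x y _ _ hx hy =>
    obtain ⟨a, rfl | rfl⟩ := hx <;> obtain ⟨b, rfl | rfl⟩ := hy
    · exact ⟨a + b, Or.inl (zpow_add _ _ _).symm⟩
    · exact ⟨a + b, Or.inr (by rw [zpow_add, mul_assoc])⟩
    · exact ⟨a - b, Or.inr (by rw [mul_assoc, hc, zpow_sub, mul_assoc])⟩
    · exact ⟨a - b, Or.inl (by
        rw [mul_assoc, ← mul_assoc (cs.simple i), hc, zpow_sub, mul_assoc, hi, mul_one])⟩
  | inv x _ hx =>
    obtain ⟨a, rfl | rfl⟩ := hx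
    · exact ⟨-a, Or.inl (zpow_neg _ _).symm⟩
    · exact ⟨a, Or.inr (by
        rw [mul_inv_rev, cs.inv_simple, ← zpow_neg, hc, zpow_neg, inv_inv])⟩

include hK in
theorem dihedral_centralizer {i j : B} (hij : i ≠ j) (v : W)
    (hv : v ∈ Subgroup.closure {cs.simple i, cs.simple j})
    (hc : v * cs.simple i = cs.simple i * v) :
    v ∈ Subgroup.closure {cs.simple i, (cs.simple i * cs.simple j) ^ K i j} := by
  have key : ∀ n : ℤ, (cs.simple i * cs.simple j) ^ n * cs.simple i =
      cs.simple i * (cs.simple i * cs.simple j) ^ n →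
      (cs.simple i * cs.simple j) ^ n ∈
        Subgroup.closure {cs.simple i, (cs.simple i * cs.simple j) ^ K i j} := by
    intro n hn
    rw [conj_zpow_simple] at hn
    have h1 := mul_right_cancel hn
    rw [eq_inv_iff_mul_eq_one, ← zpow_add] at h1
    have h2 := dvd_of_pow cs K hK hij _ h1
    rw [hK i j hij] at h2
    obtain ⟨c, hc⟩ := h2
    have : n = K i j * c := by push_cast at hc; linarith
    rw [this, zpow_mul, zpow_natCast]
    exact Subgroup.zpow_mem _ (Subgroup.subset_closure (by simp)) _
  obtain ⟨n, rfl | rfl⟩ := mem_dihedral cs i j v hv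
  · exact key n hc
  · refine Subgroup.mul_mem _ (key n ?_) (Subgroup.subset_closure (by simp))
    rw [← mul_assoc] at hc
    exact mul_right_cancel hc

include hK in
theorem centralizer_le (i : B) (n : ℕ) : ∀ w : W, cs.length w ≤ n →
    w * cs.simple i = cs.simple i * w →
    w ∈ Subgroup.closure ({cs.simple i} ∪
      {x | ∃ j, j ≠ i ∧ x = (cs.simple i * cs.simple j) ^ K i j}) := by
  induction n with
  | zero =>
    intro w hw _
    have : w = 1 := by simpa using hw
    rw [this]; exact Subgroup.one_mem _
  | succ n ih =>
    intro w hw hc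
    by_cases h1 : w = 1
    · rw [h1]; exact Subgroup.one_mem _
    obtain ⟨j, hj⟩ := cs.exists_rightDescent_of_ne_one h1
    unfold CoxeterSystem.IsRightDescent at hj
    by_cases hij : j = i
    · subst hij
      have h2 := ih (w * cs.simple j) (by omega) (by rw [← mul_assoc, hc])
      have h3 : w = w * cs.simple j * cs.simple j := by simp
      rw [h3]
      exact Subgroup.mul_mem _ h2 (Subgroup.subset_closure (by simp))
    set D := Subgroup.closure {cs.simple i, cs.simple j} with hD
    have hiD : cs.simple i ∈ D := Subgroup.subset_closure (by simp)
    have hjD : cs.simple j ∈ D := Subgroup.subset_closure (by simp)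
    obtain ⟨d, hdD, hdmin⟩ : ∃ d ∈ D, ∀ e ∈ D, cs.length (w * d) ≤ cs.length (w * e) := by
      obtain ⟨d, hd, hm⟩ := (measure (fun d => cs.length (w * d))).wf.has_min (D : Set W)
        ⟨1, D.one_mem⟩
      exact ⟨d, hd, fun e he => not_lt.1 (hm e he)⟩
    set w' := w * d with hw'
    set t := d⁻¹ * cs.simple i * d with ht
    have htD : t ∈ D := D.mul_mem (D.mul_mem (D.inv_mem hdD) hiD) hdD
    have hcomm : w' * t = cs.simple i * w' := by
      rw [hw', ht, ← mul_assoc (cs.simple i), ← hc]; group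
    have hzero : ∀ u ∈ D, eta cs w' u = 0 := by
      intro u hu
      rcases zmod_two_cases (eta cs w' u) with h | h
      · exact h
      · have h2 := length_lt_of_eta cs h
        have h3 := hdmin (d * u) (D.mul_mem hdD hu)
        rw [← mul_assoc] at h3
        exact absurd h2 (not_lt.2 h3)
    have heta : ∀ u ∈ D, u ≠ t → eta cs t u = 0 := by
      intro u hu hut
      have h2 := congrArg (fun z => eta cs z u) hcomm
      simp only [eta_mul, eta_simple] at h2
      rw [hzero u hu, hzero _ (D.mul_mem (D.mul_mem htD hu) (D.inv_mem htD)), add_zero,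
        zero_add] at h2
      rw [h2]
      apply ind_ne
      intro h3
      rw [mul_inv_eq_iff_eq_mul, ← hcomm] at h3
      exact hut (mul_left_cancel h3)
    have hti : t = cs.simple i := by
      by_contra hti
      have htj : t ≠ cs.simple j := by
        intro h
        apply not_conj cs K hK (Ne.symm hij) d⁻¹
        rw [inv_inv]
        exact h
      have h2 : t = 1 := eq_one_of_no_descent cs i j t htD
        (heta _ hiD (Ne.symm hti)) (heta _ hjD htj.symm)
      apply simple_ne_one cs i
      rw [ht, mul_assoc, inv_mul_eq_one] at h2
      exact right_eq_mul.1 h2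
    have hlen : cs.length w' < cs.length w := (hdmin _ hjD).trans_lt hj
    rw [hti] at hcomm
    have hw'mem := ih w' (by omega) hcomm
    have hdc : d * cs.simple i = cs.simple i * d := by
      rw [ht, mul_assoc, inv_mul_eq_iff_eq_mul] at hti
      exact hti.symm
    have hdmem := dihedral_centralizer cs K hK (Ne.symm hij) d hdD hdc
    have hdmem' : d ∈ Subgroup.closure ({cs.simple i} ∪
      {x | ∃ j, j ≠ i ∧ x = (cs.simple i * cs.simple j) ^ K i j}) := by
      refine Subgroup.closure_mono ?_ hdmem
      rintro x (rfl | rfl)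
      · left; rfl
      · right; exact ⟨j, hij, rfl⟩
    have h3 : w = w' * d⁻¹ := by rw [hw']; group
    rw [h3]
    exact Subgroup.mul_mem _ hw'mem (Subgroup.inv_mem _ hdmem')

include hK in
theorem centralizer_eq (i : B) : Subgroup.centralizer {cs.simple i} =
    Subgroup.closure ({cs.simple i} ∪
      {x | ∃ j, j ≠ i ∧ x = (cs.simple i * cs.simple j) ^ K i j}) := by
  apply le_antisymm
  · intro w hw
    rw [Subgroup.mem_centralizer_singleton_iff] at hw
    exact centralizer_le cs K hK i _ w le_rfl hw
  · rw [Subgroup.closure_le]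
    rintro x (rfl | ⟨j, hj, rfl⟩)
    · exact Subgroup.mem_centralizer_singleton_iff.2 rfl
    · refine Subgroup.mem_centralizer_singleton_iff.2 ?_
      have h := conj_zpow_simple cs i j (K i j)
      rw [zpow_natCast] at h
      rw [h]
      congr 1
      rw [eq_inv_iff_mul_eq_one, ← pow_add, ← two_mul, ← hK i j hj.symm]
      exact cs.simple_mul_simple_pow i j

end even

/-- The Coxeter matrix of the triangle group. -/
def triMat (k l m : ℕ) : CoxeterMatrix (Fin 3) where
  M := !![1, 2 * k, 2 * m; 2 * k, 1, 2 * l; 2 * m, 2 * l, 1]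
  isSymm := by
    ext i j; fin_cases i <;> fin_cases j <;> rfl
  diagonal i := by fin_cases i <;> rfl
  off_diagonal i j h := by
    fin_cases i <;> fin_cases j <;> simp at h ⊢

theorem cgen_rel (k l m : ℕ) {r : FreeGroup (Fin 3)} (h : r ∈ triRels k l m) :
    (PresentedGroup.mk (triRels k l m) r) = 1 :=
  (QuotientGroup.eq_one_iff _).2 (Subgroup.subset_normalClosure h)

theorem cgen_sq (k l m : ℕ) (j : Fin 3) : cgen k l m j * cgen k l m j = 1 := by
  have h : (FreeGroup.of j) ^ 2 ∈ triRels k l m := by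
    fin_cases j <;> simp [triRels]
  have := cgen_rel k l m h
  rw [map_pow, sq] at this
  exact this

theorem cgen_inv (k l m : ℕ) (j : Fin 3) : (cgen k l m j)⁻¹ = cgen k l m j :=
  inv_eq_of_mul_eq_one_left (cgen_sq k l m j)

theorem cgen_swap (k l m : ℕ) (i j : Fin 3) (n : ℕ) :
    (cgen k l m j * cgen k l m i) ^ n = ((cgen k l m i * cgen k l m j) ^ n)⁻¹ := by
  rw [← inv_pow, mul_inv_rev, cgen_inv, cgen_inv]

theorem cgen01 (k l m : ℕ) : (cgen k l m 0 * cgen k l m 1) ^ k = 1 := by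
  have := cgen_rel k l m (r := (FreeGroup.of 0 * FreeGroup.of 1) ^ k) (by simp [triRels])
  rw [map_pow, map_mul] at this
  exact this

theorem cgen12 (k l m : ℕ) : (cgen k l m 1 * cgen k l m 2) ^ l = 1 := by
  have := cgen_rel k l m (r := (FreeGroup.of 1 * FreeGroup.of 2) ^ l) (by simp [triRels])
  rw [map_pow, map_mul] at this
  exact this

theorem cgen20 (k l m : ℕ) : (cgen k l m 2 * cgen k l m 0) ^ m = 1 := by
  have := cgen_rel k l m (r := (FreeGroup.of 2 * FreeGroup.of 0) ^ m) (by simp [triRels])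
  rw [map_pow, map_mul] at this
  exact this

theorem cgen_liftable (k l m : ℕ) :
    (triMat k l m).IsLiftable (cgen (2 * k) (2 * l) (2 * m)) := by
  intro i j
  have h01 := cgen01 (2 * k) (2 * l) (2 * m)
  have h12 := cgen12 (2 * k) (2 * l) (2 * m)
  have h20 := cgen20 (2 * k) (2 * l) (2 * m)
  have hs := cgen_sq (2 * k) (2 * l) (2 * m)
  have hw := cgen_swap (2 * k) (2 * l) (2 * m)
  fin_cases i <;> fin_cases j
  · exact (pow_one _).trans (hs 0)
  · exact h01
  · exact (hw 2 0 (2 * m)).trans (by rw [h20, inv_one])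
  · exact (hw 0 1 (2 * k)).trans (by rw [h01, inv_one])
  · exact (pow_one _).trans (hs 1)
  · exact h12
  · exact h20
  · exact (hw 1 2 (2 * l)).trans (by rw [h12, inv_one])
  · exact (pow_one _).trans (hs 2)

theorem simple_rels (k l m : ℕ) : ∀ r ∈ triRels (2 * k) (2 * l) (2 * m),
    FreeGroup.lift (triMat k l m).toCoxeterSystem.simple r = 1 := by
  set cs := (triMat k l m).toCoxeterSystem
  rintro r (rfl | rfl | rfl | rfl | rfl | rfl)
  · simp
  · simp
  · simp
  · simp only [map_pow, map_mul, FreeGroup.lift_apply_of]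
    exact cs.simple_mul_simple_pow 0 1
  · simp only [map_pow, map_mul, FreeGroup.lift_apply_of]
    exact cs.simple_mul_simple_pow 1 2
  · simp only [map_pow, map_mul, FreeGroup.lift_apply_of]
    exact cs.simple_mul_simple_pow 2 0

/-- Forward map. -/
def fwd (k l m : ℕ) : Tri (2 * k) (2 * l) (2 * m) →* (triMat k l m).Group :=
  PresentedGroup.toGroup (simple_rels k l m)

theorem fwd_cgen (k l m : ℕ) (j : Fin 3) : fwd k l m (cgen _ _ _ j) =
    (triMat k l m).toCoxeterSystem.simple j :=
  PresentedGroup.toGroup.of (simple_rels k l m)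

/-- Backward map. -/
noncomputable def bwd (k l m : ℕ) : (triMat k l m).Group →* Tri (2 * k) (2 * l) (2 * m) :=
  (triMat k l m).toCoxeterSystem.lift ⟨_, cgen_liftable k l m⟩

theorem bwd_simple (k l m : ℕ) (j : Fin 3) :
    bwd k l m ((triMat k l m).toCoxeterSystem.simple j) = cgen _ _ _ j :=
  (triMat k l m).toCoxeterSystem.lift_apply_simple (cgen_liftable k l m) j

/-- The Coxeter system structure on the triangle group. -/
noncomputable def triSys (k l m : ℕ) :
    CoxeterSystem (triMat k l m) (Tri (2 * k) (2 * l) (2 * m)) where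
  mulEquiv := MonoidHom.toMulEquiv (fwd k l m) (bwd k l m)
    (by
      refine PresentedGroup.ext (rels := triRels (2 * k) (2 * l) (2 * m)) fun j => ?_
      change bwd k l m (fwd k l m (cgen _ _ _ j)) = cgen _ _ _ j
      rw [fwd_cgen, bwd_simple])
    (by
      refine (triMat k l m).toCoxeterSystem.ext_simple fun j => ?_
      rw [MonoidHom.comp_apply, bwd_simple, fwd_cgen, MonoidHom.id_apply])

theorem triSys_simple (k l m : ℕ) (j : Fin 3) :
    (triSys k l m).simple j = cgen _ _ _ j := bwd_simple k l m j

/-- Half of the labels. -/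
def halfMat (k l m : ℕ) (i j : Fin 3) : ℕ := (!![1, k, m; k, 1, l; m, l, 1] : Matrix _ _ ℕ) i j

theorem tri_centralizer (k l m : ℕ) (i : Fin 3) :
    Subgroup.centralizer {cgen (2 * k) (2 * l) (2 * m) i} =
    Subgroup.closure ({cgen (2 * k) (2 * l) (2 * m) i} ∪
      {x | ∃ j, j ≠ i ∧ x = (cgen (2 * k) (2 * l) (2 * m) i *
        cgen (2 * k) (2 * l) (2 * m) j) ^ halfMat k l m i j}) := by
  have h := centralizer_eq (triSys k l m) (halfMat k l m) (by
    intro a b hab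
    fin_cases a <;> fin_cases b <;> first | exact absurd rfl hab | rfl) i
  simpa only [triSys_simple] using h

theorem half_swap {G : Type*} [Group G] {x : G} {n : ℕ} (h : x ^ (2 * n) = 1) :
    (x ^ n)⁻¹ = x ^ n := by
  rw [inv_eq_iff_mul_eq_one, ← pow_add, ← two_mul, h]

end EvenCox

/-- in `Δ(2k, 2l, 2m)` (all link periods even), the centralizer of `c₀` is
generated by `c₀`, `(c₀c₁)^k`, `(c₀c₂)^m`; that of `c₁` by `c₁`, `(c₀c₁)^k`, `(c₁c₂)^l`;
and that of `c₂` by `c₂`, `(c₀c₂)^m`, `(c₁c₂)^l`. -/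
theorem centralizer_all_even (k l m : ℕ) (hk : 1 ≤ k) (hl : 1 ≤ l) (hm : 1 ≤ m)
    (harea : (1 : ℚ) / (2 * k) + 1 / (2 * l) + 1 / (2 * m) < 1) :
    ∀ c₀ c₁ c₂ : Tri (2 * k) (2 * l) (2 * m),
      c₀ = cgen _ _ _ 0 → c₁ = cgen _ _ _ 1 → c₂ = cgen _ _ _ 2 →
      Subgroup.centralizer {c₀} =
        Subgroup.closure {c₀, (c₀ * c₁) ^ k, (c₀ * c₂) ^ m} ∧
      Subgroup.centralizer {c₁} =
        Subgroup.closure {c₁, (c₀ * c₁) ^ k, (c₁ * c₂) ^ l} ∧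
      Subgroup.centralizer {c₂} =
        Subgroup.closure {c₂, (c₀ * c₂) ^ m, (c₁ * c₂) ^ l} := by
  rintro _ _ _ rfl rfl rfl
  have h01 := EvenCox.cgen01 (2 * k) (2 * l) (2 * m)
  have h12 := EvenCox.cgen12 (2 * k) (2 * l) (2 * m)
  have h20 := EvenCox.cgen20 (2 * k) (2 * l) (2 * m)
  have hw := EvenCox.cgen_swap (2 * k) (2 * l) (2 * m)
  have e02 : (cgen (2 * k) (2 * l) (2 * m) 2 * cgen (2 * k) (2 * l) (2 * m) 0) ^ m =
      (cgen (2 * k) (2 * l) (2 * m) 0 * cgen (2 * k) (2 * l) (2 * m) 2) ^ m := by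
    rw [hw 2 0, EvenCox.half_swap h20]
  have e10 : (cgen (2 * k) (2 * l) (2 * m) 1 * cgen (2 * k) (2 * l) (2 * m) 0) ^ k =
      (cgen (2 * k) (2 * l) (2 * m) 0 * cgen (2 * k) (2 * l) (2 * m) 1) ^ k := by
    rw [hw 0 1, EvenCox.half_swap h01]
  have e21 : (cgen (2 * k) (2 * l) (2 * m) 2 * cgen (2 * k) (2 * l) (2 * m) 1) ^ l =
      (cgen (2 * k) (2 * l) (2 * m) 1 * cgen (2 * k) (2 * l) (2 * m) 2) ^ l := by
    rw [hw 1 2, EvenCox.half_swap h12]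
  refine ⟨?_, ?_, ?_⟩
  · rw [EvenCox.tri_centralizer]
    congr 1
    ext x
    simp [Fin.exists_fin_succ, EvenCox.halfMat]
  · rw [EvenCox.tri_centralizer]
    congr 1
    ext x
    simp [Fin.exists_fin_succ, EvenCox.halfMat, e10]
  · rw [EvenCox.tri_centralizer]
    congr 1
    ext x
    simp [Fin.exists_fin_succ, EvenCox.halfMat, e02, e21]
end

section
/- Let p be a rational prime with p ≡ 1 (mod 6). Then there exist integers a and b such that p = a² + a·b + b². -/
/-- a rational prime `p ≡ 1 (mod 6)` is expressible as `a² + ab + b²`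
for some integers `a`, `b`. -/
theorem prime_one_mod_six_eq_norm_form (p : ℕ) (hp : p.Prime) (hp6 : p % 6 = 1) :
    ∃ a b : ℤ, (p : ℤ) = a ^ 2 + a * b + b ^ 2 := by
  have : Fact p.Prime := ⟨hp⟩
  -- a primitive cube root of unity modulo p
  obtain ⟨t, ht⟩ : ∃ t : ZMod p, t ^ 2 + t + 1 = 0 := by
    have : Fact (Nat.Prime 3) := ⟨Nat.prime_three⟩
    have hd : 3 ∣ Fintype.card (ZMod p)ˣ := by
      rw [ZMod.card_units]; omega
    obtain ⟨u, hu⟩ := exists_prime_orderOf_dvd_card 3 hd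
    have h3 : u ^ 3 = 1 := by rw [← hu]; exact pow_orderOf_eq_one u
    have h1 : (u : ZMod p) ≠ 1 := by
      intro h
      have : u = 1 := Units.ext h
      rw [this, orderOf_one] at hu
      omega
    have h3' : (u : ZMod p) ^ 3 = 1 := by
      rw [← Units.val_pow_eq_pow_val, h3, Units.val_one]
    refine ⟨u, ?_⟩
    have : ((u : ZMod p) - 1) * ((u : ZMod p) ^ 2 + u + 1) = 0 := by
      linear_combination h3'
    exact (mul_eq_zero.mp this).resolve_left (sub_ne_zero.mpr h1)
  -- pigeonhole
  set k := Nat.sqrt p with hk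
  have hk1 : p < (k + 1) * (k + 1) := Nat.lt_succ_sqrt p
  have hk2 : k * k ≤ p := Nat.sqrt_le p
  have hk3 : k * k < p := by
    refine lt_of_le_of_ne hk2 fun h => ?_
    have hone := hp.one_lt
    rw [← h] at hp
    have := Nat.not_prime_mul (a := k) (b := k)
      (by rintro h1; rw [h1] at h; omega) (by rintro h1; rw [h1] at h; omega)
    exact this hp
  obtain ⟨x, -, y, -, hxy, hf⟩ := Finset.exists_ne_map_eq_of_card_lt_of_maps_to
    (s := (Finset.univ : Finset (Fin (k + 1) × Fin (k + 1))))
    (t := (Finset.univ : Finset (ZMod p)))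
    (f := fun z => ((z.1 : ℕ) : ZMod p) - t * ((z.2 : ℕ) : ZMod p))
    (by simpa [ZMod.card] using hk1) (fun _ _ => Finset.mem_coe.mpr (Finset.mem_univ _))
  obtain ⟨a, ha⟩ : ∃ a : ℤ, a = (x.1 : ℕ) - (y.1 : ℕ) := ⟨_, rfl⟩
  obtain ⟨b, hb⟩ : ∃ b : ℤ, b = (x.2 : ℕ) - (y.2 : ℕ) := ⟨_, rfl⟩
  have hab : ¬ (a = 0 ∧ b = 0) := by
    rintro ⟨h1, h2⟩
    exact hxy (Prod.ext (Fin.ext (by omega)) (Fin.ext (by omega)))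
  have hx1 := x.1.isLt
  have hx2 := x.2.isLt
  have hy1 := y.1.isLt
  have hy2 := y.2.isLt
  have ha1 : -(k : ℤ) ≤ a := by omega
  have ha2 : a ≤ k := by omega
  have hb1 : -(k : ℤ) ≤ b := by omega
  have hb2 : b ≤ k := by omega
  have hdvd : (p : ℤ) ∣ a ^ 2 + a * b + b ^ 2 := by
    rw [← ZMod.intCast_zmod_eq_zero_iff_dvd]
    have hc : (a : ZMod p) = t * (b : ZMod p) := by
      rw [ha, hb]; push_cast
      linear_combination hf
    push_cast
    rw [hc]
    linear_combination (b : ZMod p) ^ 2 * ht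
  obtain ⟨c, hc⟩ := hdvd
  have hpos : 0 < a ^ 2 + a * b + b ^ 2 := by
    by_contra h
    have h1 : b = 0 := by
      have : b ^ 2 ≤ 0 := by nlinarith [sq_nonneg (2 * a + b)]
      exact pow_eq_zero_iff (two_ne_zero) |>.mp (le_antisymm this (sq_nonneg b))
    have h2 : a = 0 := by
      have : a ^ 2 ≤ 0 := by nlinarith [sq_nonneg (2 * b + a)]
      exact pow_eq_zero_iff (two_ne_zero) |>.mp (le_antisymm this (sq_nonneg a))
    exact hab ⟨h2, h1⟩
  have hk4 : (k : ℤ) * k < p := by exact_mod_cast hk3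
  have hlt : a ^ 2 + a * b + b ^ 2 < 3 * p := by
    have e1 : a ^ 2 ≤ k * k := by nlinarith
    have e2 : b ^ 2 ≤ k * k := by nlinarith
    nlinarith [sq_nonneg (a - b)]
  have hp0 : (0 : ℤ) < p := by exact_mod_cast hp.pos
  have hc1 : 0 < c := by
    rw [hc] at hpos
    exact pos_of_mul_pos_right hpos hp0.le
  have hc2 : c < 3 := by
    rw [hc] at hlt
    nlinarith
  obtain rfl | rfl : c = 1 ∨ c = 2 := by omega
  · exact ⟨a, b, by linarith⟩
  · exfalso
    have hodd : (p : ℤ) % 2 = 1 := by omega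
    rcases Int.even_or_odd' a with ⟨m, rfl | rfl⟩ <;>
    rcases Int.even_or_odd' b with ⟨n, rfl | rfl⟩ <;> ring_nf at hc <;> omega
end

section
/- Let n be a positive integer. The group presented on three generators x, y, c with relators x^n, c⁴, x y x⁻¹ y⁻¹, c y c⁻¹ x⁻¹, and c x c⁻¹ y is isomorphic to the semidirect product (ZMod n × ZMod n) ⋊ ZMod 4, where the generator 1 of ZMod 4 acts on ZMod n × ZMod n by the automorphism (a, b) ↦ (b, −a); under the isomorphism, x, y, c correspond to ((1,0), 0), ((0,1), 0), ((0,0), 1) respectively. -/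
/-- Relators `x^n, c⁴, xyx⁻¹y⁻¹, cyc⁻¹x⁻¹, cxc⁻¹y` on generators `x = 0`, `y = 1`,
`c = 2`. -/
def relsA (n : ℕ) : Set (FreeGroup (Fin 3)) :=
  {FreeGroup.of 0 ^ n, FreeGroup.of 2 ^ 4,
   FreeGroup.of 0 * FreeGroup.of 1 * (FreeGroup.of 0)⁻¹ * (FreeGroup.of 1)⁻¹,
   FreeGroup.of 2 * FreeGroup.of 1 * (FreeGroup.of 2)⁻¹ * (FreeGroup.of 0)⁻¹,
   FreeGroup.of 2 * FreeGroup.of 0 * (FreeGroup.of 2)⁻¹ * FreeGroup.of 1}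

/-- The order-4 automorphism `(a, b) ↦ (b, −a)` of `ZMod n × ZMod n`. -/
def σA (n : ℕ) : (ZMod n × ZMod n) ≃+ (ZMod n × ZMod n) where
  toFun p := (p.2, -p.1)
  invFun p := (-p.2, p.1)
  left_inv p := by simp
  right_inv p := by simp
  map_add' p q := by simp [Prod.ext_iff]; ring

/-- The homomorphism from `ZMod m` sending `1` to an element killed by `m`. -/
noncomputable def zmodHomA {G : Type*} [Group G] (m : ℕ) (g : G) (h : g ^ m = 1) :
    Multiplicative (ZMod m) →* G :=
  AddMonoidHom.toMultiplicativeLeft (ZMod.lift m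
    ⟨(zmultiplesHom (Additive G)) (Additive.ofMul g), by
      simp only [zmultiplesHom_apply, natCast_zsmul, ← ofMul_pow, h, ofMul_one]⟩)

theorem zmodHomA_intCast {G : Type*} [Group G] (m : ℕ) (g : G) (h : g ^ m = 1) (i : ℤ) :
    zmodHomA m g h (Multiplicative.ofAdd (i : ZMod m)) = g ^ i := by
  simp [zmodHomA]

/-- The homomorphism from `ZMod n × ZMod n` given by two commuting elements. -/
noncomputable def pairHomA {G : Type*} [Group G] (n : ℕ) (x y : G) (hx : x ^ n = 1)
    (hy : y ^ n = 1) (hxy : Commute x y) : Multiplicative (ZMod n × ZMod n) →* G :=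
  MonoidHom.mk' (fun p => zmodHomA n x hx (Multiplicative.ofAdd p.toAdd.1) *
    zmodHomA n y hy (Multiplicative.ofAdd p.toAdd.2)) (by
      intro p q
      obtain ⟨a, b⟩ := p
      obtain ⟨a', b'⟩ := q
      obtain ⟨i, rfl⟩ := ZMod.intCast_surjective a
      obtain ⟨j, rfl⟩ := ZMod.intCast_surjective b
      obtain ⟨k, rfl⟩ := ZMod.intCast_surjective a'
      obtain ⟨l, rfl⟩ := ZMod.intCast_surjective b'
      change zmodHomA n x hx (Multiplicative.ofAdd ((i : ZMod n) + (k : ZMod n))) *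
        zmodHomA n y hy (Multiplicative.ofAdd ((j : ZMod n) + (l : ZMod n))) =
        (zmodHomA n x hx (Multiplicative.ofAdd (i : ZMod n)) *
        zmodHomA n y hy (Multiplicative.ofAdd (j : ZMod n))) *
        (zmodHomA n x hx (Multiplicative.ofAdd (k : ZMod n)) *
        zmodHomA n y hy (Multiplicative.ofAdd (l : ZMod n)))
      rw [← Int.cast_add, ← Int.cast_add]
      simp only [zmodHomA_intCast, zpow_add]
      have := (hxy.zpow_zpow k j).eq
      rw [mul_assoc, mul_assoc, ← mul_assoc (x ^ k), this, mul_assoc])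

theorem pairHomA_intCast {G : Type*} [Group G] (n : ℕ) (x y : G) (hx : x ^ n = 1)
    (hy : y ^ n = 1) (hxy : Commute x y) (i j : ℤ) :
    pairHomA n x y hx hy hxy (Multiplicative.ofAdd ((i : ZMod n), (j : ZMod n))) =
      x ^ i * y ^ j := by
  rw [← zmodHomA_intCast n x hx, ← zmodHomA_intCast n y hy]
  rfl

theorem relA_eq_one {n : ℕ} {r : FreeGroup (Fin 3)} (h : r ∈ relsA n) :
    PresentedGroup.mk (relsA n) r = 1 :=
  PresentedGroup.one_of_mem h

/-- The compatibility condition of the semidirect product lift. -/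
theorem compatA {G : Type*} [Group G] (n : ℕ) (x y c : G) (hx : x ^ n = 1)
    (hy : y ^ n = 1) (hxy : Commute x y) (hc : c ^ 4 = 1)
    (hcy : c * y * c⁻¹ = x) (hcx : c * x * c⁻¹ = y⁻¹)
    (φ : Multiplicative (ZMod 4) →* MulAut (Multiplicative (ZMod n × ZMod n)))
    (hφ : φ (Multiplicative.ofAdd (1 : ZMod 4)) = AddEquiv.toMultiplicative (σA n))
    (g : Multiplicative (ZMod 4)) (p : Multiplicative (ZMod n × ZMod n)) :
    pairHomA n x y hx hy hxy (φ g p) =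
      zmodHomA 4 c hc g * pairHomA n x y hx hy hxy p * (zmodHomA 4 c hc g)⁻¹ := by
  have h1 : ∀ p : Multiplicative (ZMod n × ZMod n),
      pairHomA n x y hx hy hxy (φ (Multiplicative.ofAdd 1) p) =
      c * pairHomA n x y hx hy hxy p * c⁻¹ := by
    rintro ⟨a, b⟩
    obtain ⟨i, rfl⟩ := ZMod.intCast_surjective a
    obtain ⟨j, rfl⟩ := ZMod.intCast_surjective b
    have e : φ (Multiplicative.ofAdd 1) (Multiplicative.ofAdd ((i : ZMod n), (j : ZMod n))) =
        Multiplicative.ofAdd ((j : ZMod n), ((-i : ℤ) : ZMod n)) := by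
      rw [hφ, Int.cast_neg]; rfl
    refine (congrArg _ e).trans ?_
    refine Eq.trans ?_ (congrArg (fun t => c * t * c⁻¹)
      (pairHomA_intCast n x y hx hy hxy i j).symm)
    rw [pairHomA_intCast]
    have e2 : c * (x ^ i * y ^ j) * c⁻¹ = (c * x * c⁻¹) ^ i * (c * y * c⁻¹) ^ j := by
      rw [conj_zpow, conj_zpow]; group
    simp only [e2, hcx, hcy, inv_zpow']
    exact (hxy.zpow_zpow j (-i)).eq
  have hone : zmodHomA 4 c hc (Multiplicative.ofAdd 1) = c := by
    simpa using zmodHomA_intCast 4 c hc 1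
  have h2 : ∀ (k : ℕ) (p : Multiplicative (ZMod n × ZMod n)),
      pairHomA n x y hx hy hxy (φ (Multiplicative.ofAdd (1 : ZMod 4) ^ k) p) =
      c ^ k * pairHomA n x y hx hy hxy p * (c ^ k)⁻¹ := by
    intro k
    induction k with
    | zero => intro p; simp
    | succ k ih =>
      intro p
      rw [pow_succ, map_mul, MulAut.mul_apply, ih, h1]
      group
  obtain ⟨k, rfl⟩ : ∃ k : ℕ, g = Multiplicative.ofAdd (1 : ZMod 4) ^ k := by
    refine ⟨(Multiplicative.toAdd g).val, ?_⟩
    rw [← ofAdd_nsmul]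
    simp
  rw [h2, map_pow, hone]

/-- the group presented by `⟨x, y, c ∣ x^n, c⁴, [x,y], cyc⁻¹x⁻¹, cxc⁻¹y⟩`
is isomorphic to `(ZMod n × ZMod n) ⋊ ZMod 4`, where `1 ∈ ZMod 4` acts by
`(a, b) ↦ (b, −a)`, with `x, y, c` corresponding to `((1,0),0)`, `((0,1),0)`,
`((0,0),1)`. -/
theorem presentedGroup_A_iso_semidirect (n : ℕ) (hn : 1 ≤ n)
    (φ : Multiplicative (ZMod 4) →* MulAut (Multiplicative (ZMod n × ZMod n)))
    (hφ : φ (Multiplicative.ofAdd (1 : ZMod 4)) = AddEquiv.toMultiplicative (σA n)) :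
    ∃ e : PresentedGroup (relsA n) ≃*
        (Multiplicative (ZMod n × ZMod n) ⋊[φ] Multiplicative (ZMod 4)),
      e (PresentedGroup.of 0) =
        SemidirectProduct.inl (Multiplicative.ofAdd ((1 : ZMod n), (0 : ZMod n))) ∧
      e (PresentedGroup.of 1) =
        SemidirectProduct.inl (Multiplicative.ofAdd ((0 : ZMod n), (1 : ZMod n))) ∧
      e (PresentedGroup.of 2) =
        SemidirectProduct.inr (Multiplicative.ofAdd (1 : ZMod 4)) := by
  set x : PresentedGroup (relsA n) := PresentedGroup.of 0 with hxd
  set y : PresentedGroup (relsA n) := PresentedGroup.of 1 with hyd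
  set c : PresentedGroup (relsA n) := PresentedGroup.of 2 with hcd
  have hx : x ^ n = 1 := relA_eq_one (n := n) (r := FreeGroup.of 0 ^ n) (by simp [relsA])
  have hc : c ^ 4 = 1 := relA_eq_one (n := n) (r := FreeGroup.of 2 ^ 4) (by simp [relsA])
  have h3 : x * y * x⁻¹ * y⁻¹ = 1 := relA_eq_one (n := n)
    (r := FreeGroup.of 0 * FreeGroup.of 1 * (FreeGroup.of 0)⁻¹ * (FreeGroup.of 1)⁻¹)
    (by simp [relsA])
  have h4 : c * y * c⁻¹ * x⁻¹ = 1 := relA_eq_one (n := n)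
    (r := FreeGroup.of 2 * FreeGroup.of 1 * (FreeGroup.of 2)⁻¹ * (FreeGroup.of 0)⁻¹)
    (by simp [relsA])
  have h5 : c * x * c⁻¹ * y = 1 := relA_eq_one (n := n)
    (r := FreeGroup.of 2 * FreeGroup.of 0 * (FreeGroup.of 2)⁻¹ * FreeGroup.of 1)
    (by simp [relsA])
  have hcy : c * y * c⁻¹ = x := mul_inv_eq_one.mp h4
  have hcx : c * x * c⁻¹ = y⁻¹ := eq_inv_of_mul_eq_one_left h5
  have hxy : Commute x y := mul_inv_eq_iff_eq_mul.mp (mul_inv_eq_one.mp h3) |>.trans rfl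
  have hy : y ^ n = 1 := by
    have : (y⁻¹) ^ n = 1 := by rw [← hcx, conj_pow, hx]; simp
    simpa using this
  let S := Multiplicative (ZMod n × ZMod n) ⋊[φ] Multiplicative (ZMod 4)
  let X : S := SemidirectProduct.inl (Multiplicative.ofAdd ((1 : ZMod n), (0 : ZMod n)))
  let Y : S := SemidirectProduct.inl (Multiplicative.ofAdd ((0 : ZMod n), (1 : ZMod n)))
  let C : S := SemidirectProduct.inr (Multiplicative.ofAdd (1 : ZMod 4))
  have hX : X ^ n = 1 := by
    simp only [X, ← map_pow, ← ofAdd_nsmul]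
    simp
    exact map_one _
  have hC : C ^ 4 = 1 := by
    simp only [C, ← map_pow, ← ofAdd_nsmul]
    rw [show (4 • (1 : ZMod 4)) = 0 from by decide]
    simp
  have hXY : X * Y = Y * X := by
    simp only [X, Y, ← map_mul, mul_comm]
  have hCi : C⁻¹ = SemidirectProduct.inr (Multiplicative.ofAdd (1 : ZMod 4))⁻¹ :=
    (map_inv (SemidirectProduct.inr (φ := φ)) _).symm
  have hCY : C * Y * C⁻¹ = X := by
    rw [hCi]
    refine (SemidirectProduct.inl_aut (φ := φ) (Multiplicative.ofAdd (1 : ZMod 4))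
      (Multiplicative.ofAdd ((0 : ZMod n), (1 : ZMod n)))).symm.trans ?_
    rw [hφ]
    refine congrArg SemidirectProduct.inl (congrArg Multiplicative.ofAdd ?_)
    exact Prod.ext rfl neg_zero
  have hCX : C * X * C⁻¹ = Y⁻¹ := by
    rw [hCi]
    refine (SemidirectProduct.inl_aut (φ := φ) (Multiplicative.ofAdd (1 : ZMod 4))
      (Multiplicative.ofAdd ((1 : ZMod n), (0 : ZMod n)))).symm.trans ?_
    rw [hφ]
    refine Eq.trans ?_ (map_inv SemidirectProduct.inl _)
    refine congrArg SemidirectProduct.inl (congrArg Multiplicative.ofAdd ?_)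
    exact Prod.ext neg_zero.symm rfl
  have hrel : ∀ r ∈ relsA n, FreeGroup.lift ![X, Y, C] r = 1 := by
    rintro r (rfl | rfl | rfl | rfl | rfl)
    · simpa using hX
    · simpa using hC
    · simpa using mul_inv_eq_one.mpr (mul_inv_eq_iff_eq_mul.mpr hXY)
    · simp [hCY]
    · simp only [map_mul, map_inv, FreeGroup.lift_apply_of]
      exact (congrArg (· * Y) hCX).trans (inv_mul_cancel Y)
  let F : PresentedGroup (relsA n) →* S := PresentedGroup.toGroup hrel
  have Fx : F x = X := PresentedGroup.toGroup.of hrel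
  have Fy : F y = Y := PresentedGroup.toGroup.of hrel
  have Fc : F c = C := PresentedGroup.toGroup.of hrel
  let P := pairHomA n x y hx hy hxy
  let Q := zmodHomA 4 c hc
  let K : S →* PresentedGroup (relsA n) := SemidirectProduct.lift P Q (by
    intro g
    ext p
    exact compatA n x y c hx hy hxy hc hcy hcx φ hφ g p)
  have Px : P (Multiplicative.ofAdd ((1 : ZMod n), (0 : ZMod n))) = x := by
    simpa using pairHomA_intCast n x y hx hy hxy 1 0
  have Py : P (Multiplicative.ofAdd ((0 : ZMod n), (1 : ZMod n))) = y := by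
    simpa using pairHomA_intCast n x y hx hy hxy 0 1
  have Qc : Q (Multiplicative.ofAdd (1 : ZMod 4)) = c := by
    simpa using zmodHomA_intCast 4 c hc 1
  have KX : K X = x := (SemidirectProduct.lift_inl _ _ _ _).trans Px
  have KY : K Y = y := (SemidirectProduct.lift_inl _ _ _ _).trans Py
  have KC : K C = c := (SemidirectProduct.lift_inr _ _ _ _).trans Qc
  have hKF : K.comp F = MonoidHom.id _ := by
    apply PresentedGroup.ext
    intro i
    fin_cases i
    · exact (congrArg K Fx).trans KX
    · exact (congrArg K Fy).trans KY
    · exact (congrArg K Fc).trans KC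
  have hFK : F.comp K = MonoidHom.id _ := by
    apply SemidirectProduct.hom_ext
    · refine MonoidHom.ext ?_
      rintro ⟨a, b⟩
      obtain ⟨i, rfl⟩ := ZMod.intCast_surjective a
      obtain ⟨j, rfl⟩ := ZMod.intCast_surjective b
      change F (K (SemidirectProduct.inl (Multiplicative.ofAdd ((i : ZMod n), (j : ZMod n))))) =
        SemidirectProduct.inl (Multiplicative.ofAdd ((i : ZMod n), (j : ZMod n)))
      have e : K (SemidirectProduct.inl (Multiplicative.ofAdd ((i : ZMod n), (j : ZMod n)))) =
          x ^ i * y ^ j :=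
        (SemidirectProduct.lift_inl _ _ _ _).trans (pairHomA_intCast n x y hx hy hxy i j)
      rw [e, map_mul, map_zpow, map_zpow, Fx, Fy]
      simp only [X, Y, ← map_zpow, ← map_mul, ← ofAdd_zsmul, ← ofAdd_add]
      simp
    · refine MonoidHom.ext ?_
      intro a
      obtain ⟨i, hi⟩ := ZMod.intCast_surjective (Multiplicative.toAdd a)
      obtain rfl : a = Multiplicative.ofAdd (i : ZMod 4) := by rw [hi]; rfl
      change F (K (SemidirectProduct.inr (Multiplicative.ofAdd (i : ZMod 4)))) =
        SemidirectProduct.inr (Multiplicative.ofAdd (i : ZMod 4))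
      have e : K (SemidirectProduct.inr (Multiplicative.ofAdd (i : ZMod 4))) = c ^ i :=
        (SemidirectProduct.lift_inr _ _ _ _).trans (zmodHomA_intCast 4 c hc i)
      rw [e, map_zpow, Fc]
      simp only [C, ← map_zpow, ← ofAdd_zsmul]
      simp
  exact ⟨MonoidHom.toMulEquiv F K hKF hFK, Fx, Fy, Fc⟩
end
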